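/- Let w ≥ 5 be an integer and q = w−3, u = w−2. Then Σ_{a+b+c+d=w, a≥2, b,c,d≥1} (2^{a−1}−1)·2^b·(2^c+1)·ζ(a,b,c,d) = 2u·ζ(w) + q·ζ(u,2) − 2ζ(3,q). -/

import Mathlib

/-- The multiple zeta value `ζ(s₁,…,s_d) = Σ_{k₁>⋯>k_d≥1} 1/(k₁^{s₁}⋯k_d^{s_d})`. -/
noncomputable def mzv {d : ℕ} (s : Fin d → ℕ) : ℝ :=
  ∑' k : {k : Fin d → ℕ // StrictAnti k ∧ ∀ i, 0 < k i},
    ∏ i, (1 : ℝ) / (k.1 i : ℝ) ^ s i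


namespace WSum

open Finset ENNReal

/-- `U x n = 1/(n+1-x)` in extended nonnegative reals. -/
noncomputable def U (x : ℝ) (n : ℕ) : ℝ≥0∞ := ENNReal.ofReal (1 / ((n : ℝ) + 1 - x))

/-- `V n = 1/(n+1)`. -/
noncomputable abbrev V (n : ℕ) : ℝ≥0∞ := U 0 n

theorem tri_le (f : ℕ → ℕ → ℝ≥0∞) :
    ∑' n, ∑ m ∈ range (n + 1), f n m = ∑' m, ∑' d, f (m + d) m := by
  have h1 : ∀ n, ∑ m ∈ range (n + 1), f n m = ∑' m, if m ≤ n then f n m else 0 := by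
    intro n
    rw [tsum_eq_sum (s := range (n + 1))]
    · apply Finset.sum_congr rfl
      intro m hm
      rw [if_pos (by simpa [Nat.lt_succ_iff] using hm)]
    · intro m hm
      rw [if_neg (by simpa [Nat.lt_succ_iff] using hm)]
  simp_rw [h1]
  rw [ENNReal.tsum_comm]
  congr 1
  ext m
  rw [← Summable.sum_add_tsum_nat_add' (k := m) ENNReal.summable]
  rw [Finset.sum_eq_zero, zero_add]
  · congr 1
    ext d
    rw [if_pos (by omega), add_comm]
  · intro i hi
    rw [if_neg (by simpa using hi)]

theorem tri_lt (f : ℕ → ℕ → ℝ≥0∞) :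
    ∑' n, ∑ m ∈ range n, f n m = ∑' m, ∑' d, f (m + d + 1) m := by
  rw [← Summable.sum_add_tsum_nat_add' (k := 1) ENNReal.summable]
  simp only [Finset.sum_range_one, Finset.range_zero, Finset.sum_empty, zero_add]
  exact tri_le (fun n m => f (n + 1) m)

theorem cauchy (f : ℕ → ℕ → ℝ≥0∞) :
    ∑' a, ∑' b, f a b = ∑' n, ∑ a ∈ range (n + 1), f a (n - a) := by
  rw [tri_le (fun n m => f m (n - m))]
  simp

theorem tele (f : ℕ → ℝ) (hf : ∀ n, f (n + 1) ≤ f n)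
    (h0 : Filter.Tendsto f Filter.atTop (nhds 0)) :
    ∑' n, ENNReal.ofReal (f n - f (n + 1)) = ENNReal.ofReal (f 0) := by
  have h : HasSum (fun n => f n - f (n + 1)) (f 0) := by
    rw [hasSum_iff_tendsto_nat_of_nonneg (fun i => sub_nonneg.2 (hf i))]
    simp_rw [Finset.sum_range_sub']
    simpa using h0.const_sub (f 0)
  rw [← h.tsum_eq, ENNReal.ofReal_tsum_of_nonneg (fun i => sub_nonneg.2 (hf i)) h.summable]

theorem pos1 {x : ℝ} (hx : x < 1) (n : ℕ) : 0 < (n : ℝ) + 1 - x := by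
  have : (0 : ℝ) ≤ n := Nat.cast_nonneg n
  linarith

theorem U_ne_top (x : ℝ) (n : ℕ) : U x n ≠ ∞ := ENNReal.ofReal_ne_top

theorem U_shuf {x y : ℝ} (hx : x < 1) (hy : y < 1) (a b : ℕ) :
    U x a * U y b = U (x + y) (a + b + 1) * (U x a + U y b) := by
  have h1 := pos1 hx a
  have h2 := pos1 hy b
  have h3 : (0 : ℝ) < ((a + b + 1 : ℕ) : ℝ) + 1 - (x + y) := by push_cast; linarith
  unfold U
  rw [← ENNReal.ofReal_mul (by positivity), ← ENNReal.ofReal_add (by positivity) (by positivity),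
    ← ENNReal.ofReal_mul (by positivity)]
  congr 1
  push_cast at *
  field_simp
  ring

theorem U_pf {x : ℝ} (hx : x < 1) (m d : ℕ) :
    U x m * U x (m + d + 1) + V d * U x (m + d + 1) = V d * U x m := by
  have h1 := pos1 hx m
  have h2 := pos1 zero_lt_one d
  have h3 := pos1 hx (m + d + 1)
  unfold V U
  rw [← ENNReal.ofReal_mul (by positivity), ← ENNReal.ofReal_mul (by positivity),
    ← ENNReal.ofReal_mul (by positivity), ← ENNReal.ofReal_add (by positivity) (by positivity)]
  congr 1
  push_cast at *
  have h2' : (d : ℝ) + 1 ≠ 0 := by positivity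
  simp only [sub_zero] at *
  field_simp
  ring

/-- difference relation between two parameters. -/
theorem U_rel {x y : ℝ} (hy : 0 ≤ y) (hxy : x + y < 1) (n : ℕ) :
    U (x + y) n = U x n + ENNReal.ofReal y * U (x + y) n * U x n := by
  have h1 : x < 1 := by linarith
  have h1 := pos1 h1 n
  have h2 := pos1 hxy n
  unfold U
  rw [← ENNReal.ofReal_mul (by positivity), ← ENNReal.ofReal_mul (by positivity),
    ← ENNReal.ofReal_add (by positivity) (by positivity)]
  congr 1
  field_simp
  ring

theorem U_rel0 {x : ℝ} (h0 : 0 ≤ x) (hx : x < 1) (n : ℕ) :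
    U x n = V n + ENNReal.ofReal x * U x n * V n := by
  have := U_rel (x := 0) h0 (by simpa using hx) n
  simpa using this

theorem V_mul (n : ℕ) : ((n : ℝ≥0∞) + 1) * V n = 1 := by
  unfold V U
  have : ((n : ℝ≥0∞) + 1) = ENNReal.ofReal ((n : ℝ) + 1) := by
    rw [ENNReal.ofReal_add (by positivity) (by positivity)]; simp
  rw [this, ← ENNReal.ofReal_mul (by positivity), ← ENNReal.ofReal_one]
  congr 1
  field_simp
  ring

theorem U_tendsto (x : ℝ) (a : ℕ) :
    Filter.Tendsto (fun p : ℕ => 1 / (((a + p : ℕ) : ℝ) + 1 - x)) Filter.atTop (nhds 0) := by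
  have h : Filter.Tendsto (fun p : ℕ => (((a + p : ℕ) : ℝ) + 1 - x)) Filter.atTop Filter.atTop := by
    have : (fun p : ℕ => (((a + p : ℕ) : ℝ) + 1 - x)) = fun p : ℕ => (p : ℝ) + (a + 1 - x) := by
      ext p; push_cast; ring
    rw [this]
    exact Filter.tendsto_atTop_add_const_right _ _ tendsto_natCast_atTop_atTop
  simp only [one_div]
  exact h.inv_tendsto_atTop

theorem L_sum {x : ℝ} (hx : x < 1) (a d : ℕ) :
    ∑' p, U x (a + p) * U x (a + p + d + 1) = V d * ∑ i ∈ range (d + 1), U x (a + i) := by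
  set f : ℕ → ℝ := fun p => ∑ i ∈ range (d + 1), 1 / (((a + i + p : ℕ) : ℝ) + 1 - x) with hf
  have hfd : ∀ p, f p - f (p + 1) =
      1 / (((a + p : ℕ) : ℝ) + 1 - x) - 1 / (((a + p + d + 1 : ℕ) : ℝ) + 1 - x) := by
    intro p
    have e1 : ∀ i, (a + i + (p + 1)) = a + (i + 1) + p := by intro i; ring
    simp only [hf, e1]
    rw [← Finset.sum_sub_distrib, Finset.sum_range_sub' (fun i => 1 / (((a + i + p : ℕ) : ℝ) + 1 - x))]
    have e2 : a + 0 + p = a + p := by ring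
    have e3 : a + (d + 1) + p = a + p + d + 1 := by ring
    rw [e2, e3]
  have hle : ∀ p, f (p + 1) ≤ f p := by
    intro p
    rw [← sub_nonneg, hfd, sub_nonneg]
    apply one_div_le_one_div_of_le (pos1 hx _)
    push_cast
    have : (0 : ℝ) ≤ d := Nat.cast_nonneg d
    linarith
  have h0 : Filter.Tendsto f Filter.atTop (nhds 0) := by
    have := tendsto_finsetSum (range (d + 1)) (fun i _ => U_tendsto x (a + i))
    simpa [hf] using this
  have h := tele f hle h0
  have e4 : ∀ p, U x (a + p) * U x (a + p + d + 1) = V d * ENNReal.ofReal (f p - f (p + 1)) := by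
    intro p
    rw [hfd]
    have h1 := pos1 hx (a + p)
    have h2 := pos1 zero_lt_one d
    have h3 := pos1 hx (a + p + d + 1)
    unfold V U
    rw [← ENNReal.ofReal_mul (by positivity), ← ENNReal.ofReal_mul (by positivity)]
    congr 1
    push_cast at *
    have h2' : (d : ℝ) + 1 ≠ 0 := by positivity
    simp only [sub_zero] at *
    field_simp
    ring
  simp_rw [e4]
  rw [ENNReal.tsum_mul_left, h]
  congr 1
  simp only [hf, U]
  rw [ENNReal.ofReal_sum_of_nonneg]
  · simp
  · intro i _
    exact (one_div_pos.2 (pos1 hx _)).le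

/-- four-fold sums -/
noncomputable def S4 (f : ℕ → ℕ → ℕ → ℕ → ℝ≥0∞) : ℝ≥0∞ :=
  ∑' a, ∑' b, ∑' c, ∑' d, f a b c d

theorem S4_12 (f : ℕ → ℕ → ℕ → ℕ → ℝ≥0∞) : S4 (fun a b c d => f b a c d) = S4 f := by
  unfold S4; rw [ENNReal.tsum_comm]

theorem S4_23 (f : ℕ → ℕ → ℕ → ℕ → ℝ≥0∞) : S4 (fun a b c d => f a c b d) = S4 f := by
  unfold S4; congr 1; ext a; rw [ENNReal.tsum_comm]

theorem S4_34 (f : ℕ → ℕ → ℕ → ℕ → ℝ≥0∞) : S4 (fun a b c d => f a b d c) = S4 f := by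
  unfold S4; congr 1; ext a; congr 1; ext b; rw [ENNReal.tsum_comm]

theorem S4_add (f g : ℕ → ℕ → ℕ → ℕ → ℝ≥0∞) :
    S4 (fun a b c d => f a b c d + g a b c d) = S4 f + S4 g := by
  unfold S4; simp only [ENNReal.tsum_add]

theorem S4_p1 (g : ℕ → ℕ → ℕ → ℕ → ℝ≥0∞) : S4 (fun a b c d => g a c d b) = S4 g := by
  rw [← S4_34 g, ← S4_23 (fun a b c d => g a b d c)]

theorem S4_p2 (g : ℕ → ℕ → ℕ → ℕ → ℝ≥0∞) : S4 (fun a b c d => g c a d b) = S4 g := by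
  rw [← S4_12 g, ← S4_p1 (fun a b c d => g b a c d)]

theorem S4_p3 (g : ℕ → ℕ → ℕ → ℕ → ℝ≥0∞) : S4 (fun a b c d => g c d a b) = S4 g := by
  rw [← S4_23 g, ← S4_p2 (fun a b c d => g a c b d)]

/-- The generating function of the left-hand side. -/
noncomputable def GA (x : ℝ) : ℝ≥0∞ := S4 fun n p q r =>
  ENNReal.ofReal x * U (x + x) (n + p + q + r + 3) * U x (n + p + q + r + 3) *
    (2 * U (x + x) (n + p + q + 2)) * (2 * U (x + x) (n + p + 1) + U x (n + p + 1)) * U x n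

noncomputable def GB (x : ℝ) : ℝ≥0∞ := S4 fun n p n' p' =>
  ENNReal.ofReal x * (U x (n + p + 1) * U x n * U x (n' + p' + 1) * U x n' *
    U x (n + p + n' + p' + 3))

theorem GA_eq_GB {x : ℝ} (hx : x < 1) : GA x = GB x := by
  set F : ℕ → ℕ → ℕ → ℕ → ℝ≥0∞ := fun n p n' p' =>
    ENNReal.ofReal x * U (x + x) (n + p + n' + p' + 3) * U x (n + p + n' + p' + 3) *
      (U x (n' + p' + 1) * U x n * U x n') with hF
  set g1 : ℕ → ℕ → ℕ → ℕ → ℝ≥0∞ := fun a b c d =>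
    ENNReal.ofReal x * U (x + x) (a + b + c + d + 3) * U x (a + b + c + d + 3) *
      U (x + x) (a + b + c + 2) * U x (a + b + 1) * U x a with hg1
  set g2 : ℕ → ℕ → ℕ → ℕ → ℝ≥0∞ := fun a b c d =>
    ENNReal.ofReal x * U (x + x) (a + b + c + d + 3) * U x (a + b + c + d + 3) *
      U (x + x) (a + b + c + 2) * U (x + x) (a + b + 1) * U x a with hg2
  have e1 : GB x = S4 (fun n p n' p' => F n p n' p' + F n' p' n p) := by
    unfold GB
    congr 1
    ext n p n' p'
    simp only [hF]
    have h := U_shuf hx hx (n + p + 1) (n' + p' + 1)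
    have i1 : n + p + 1 + (n' + p' + 1) + 1 = n + p + n' + p' + 3 := by ring
    have i2 : n' + p' + n + p + 3 = n + p + n' + p' + 3 := by ring
    rw [i1] at h
    rw [i2]
    calc _ = (ENNReal.ofReal x * U x n * U x n' * U x (n + p + n' + p' + 3)) *
          (U x (n + p + 1) * U x (n' + p' + 1)) := by ring
      _ = _ := by rw [h]; ring
  have e2 : S4 F = S4 (fun n p n' p' => g1 n' p' n p + (g2 n n' p' p + g2 n' n p' p)) := by
    congr 1
    ext n p n' p'
    simp only [hF, hg1, hg2]
    have h := U_shuf hx hx n (n' + p' + 1)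
    have h' := U_shuf hx hx n n'
    have i1 : n + (n' + p' + 1) + 1 = n + n' + p' + 2 := by ring
    have i2 : n' + p' + n + p + 3 = n + p + n' + p' + 3 := by ring
    have i3 : n' + p' + n + 2 = n + n' + p' + 2 := by ring
    have i4 : n' + n + p' + 2 = n + n' + p' + 2 := by ring
    have i5 : n' + n + p' + p + 3 = n + p + n' + p' + 3 := by ring
    have i6 : n + n' + p' + p + 3 = n + p + n' + p' + 3 := by ring
    have i7 : n' + n + 1 = n + n' + 1 := by ring
    rw [i1] at h
    rw [i2, i3, i4, i5, i6, i7]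
    calc _ = (ENNReal.ofReal x * U (x + x) (n + p + n' + p' + 3) *
          U x (n + p + n' + p' + 3)) * U x n' * (U x n * U x (n' + p' + 1)) := by ring
      _ = (ENNReal.ofReal x * U (x + x) (n + p + n' + p' + 3) *
          U x (n + p + n' + p' + 3)) * U (x + x) (n + n' + p' + 2) *
          (U x n * U x n' + U x (n' + p' + 1) * U x n') := by rw [h]; ring
      _ = _ := by rw [h']; ring
  rw [e1, S4_add, S4_p3 F, e2, S4_add, S4_add, S4_p3 g1, S4_p1 g2, S4_p2 g2, ← S4_add, ← S4_add,
    ← S4_add]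
  unfold GA
  congr 1
  ext n p q r
  simp only [hg1, hg2]
  ring

/-- partial sums, `h x n = ∑_{i<n} U x i`. -/
noncomputable def h (x : ℝ) (n : ℕ) : ℝ≥0∞ := ∑ i ∈ range n, U x i

noncomputable def S (x : ℝ) (k : ℕ) : ℝ≥0∞ := ∑ i ∈ range (k + 1), V i * h x (i + 1)

noncomputable def W (x : ℝ) : ℝ≥0∞ :=
  ENNReal.ofReal x * ∑' k, U x k * V k * (h x k * S x k)

theorem GB_eq_W {x : ℝ} (hx : x < 1) : GB x = W x := by
  have key : ∀ k, ∑' a, ∑' b, U x (a + b + 1) * U x a * U x (k + (a + b + 1) + 1) =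
      V k * S x k := by
    intro k
    have e1 : ∀ a, ∑' b, U x (a + b + 1) * U x a * U x (k + (a + b + 1) + 1) =
        V k * ∑ i ∈ range (k + 1), U x a * U x (a + i + 1) := by
      intro a
      have h := L_sum hx (a + 1) k
      have : ∀ b, U x (a + b + 1) * U x a * U x (k + (a + b + 1) + 1) =
          U x a * (U x (a + 1 + b) * U x (a + 1 + b + k + 1)) := by
        intro b
        have i1 : a + 1 + b = a + b + 1 := by ring
        have i2 : k + (a + b + 1) + 1 = a + b + 1 + k + 1 := by ring
        rw [i1, i2]; ring
      simp_rw [this]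
      rw [ENNReal.tsum_mul_left, h]
      rw [← Finset.mul_sum]
      have : ∀ i, a + 1 + i = a + i + 1 := by intro i; ring
      simp_rw [this]
      ring
    simp_rw [e1]
    rw [ENNReal.tsum_mul_left]
    congr 1
    rw [Summable.tsum_finsetSum (fun _ _ => ENNReal.summable)]
    unfold S
    apply Finset.sum_congr rfl
    intro i _
    have h := L_sum hx 0 i
    simp only [zero_add] at h
    rw [h]
    rfl
  have e2 : GB x = ENNReal.ofReal x * ∑' n, ∑' p, U x (n + p + 1) * U x n *
      (V (n + p + 1) * S x (n + p + 1)) := by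
    unfold GB S4
    simp_rw [ENNReal.tsum_mul_left]
    congr 1
    congr 1
    ext n
    congr 1
    ext p
    rw [← key, ← ENNReal.tsum_mul_left]
    congr 1
    ext a
    rw [← ENNReal.tsum_mul_left]
    congr 1
    ext b
    have i1 : n + p + a + b + 3 = n + p + 1 + (a + b + 1) + 1 := by ring
    rw [i1]; ring
  rw [e2, W]
  congr 1
  rw [← tri_lt (fun k n => U x k * U x n * (V k * S x k))]
  congr 1
  ext k
  unfold h
  rw [Finset.sum_mul, Finset.mul_sum]
  apply Finset.sum_congr rfl
  intro i _
  ring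

/-- The connector of Seki and Yamamoto. -/
noncomputable def Cr (x : ℝ) (p q : ℕ) : ℝ :=
  Real.Gamma (p + 1 - x) * Real.Gamma (q + 1 - x) /
    (Real.Gamma (1 - x) * Real.Gamma (p + q + 1 - x))

theorem Gamma_step {x : ℝ} (hx : x < 1) (p : ℕ) :
    Real.Gamma (((p + 1 : ℕ) : ℝ) + 1 - x) = (p + 1 - x) * Real.Gamma (p + 1 - x) := by
  rw [← Real.Gamma_add_one (pos1 hx p).ne']
  congr 1; push_cast; ring

theorem Gamma_p {x : ℝ} (hx : x < 1) (p : ℕ) : 0 < Real.Gamma ((p : ℝ) + 1 - x) :=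
  Real.Gamma_pos_of_pos (pos1 hx p)

theorem Cr_pos {x : ℝ} (hx : x < 1) (p q : ℕ) : 0 < Cr x p q := by
  unfold Cr
  have h1 := Gamma_p hx p
  have h2 := Gamma_p hx q
  have h3 := Gamma_p hx (p + q)
  have h4 := Real.Gamma_pos_of_pos (sub_pos.2 hx)
  push_cast at h3
  positivity

theorem Cr_symm (x : ℝ) (p q : ℕ) : Cr x p q = Cr x q p := by
  unfold Cr
  rw [add_comm (p : ℝ) (q : ℝ), mul_comm (Real.Gamma (p + 1 - x))]

theorem Cr_zero {x : ℝ} (hx : x < 1) (q : ℕ) : Cr x 0 q = 1 := by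
  unfold Cr
  have h2 := (Gamma_p hx q).ne'
  have h4 := (Real.Gamma_pos_of_pos (sub_pos.2 hx)).ne'
  simp only [Nat.cast_zero, zero_add]
  field_simp

theorem Cr_rec {x : ℝ} (hx : x < 1) (p q : ℕ) :
    Cr x p q * (p + 1 - x) = Cr x (p + 1) q * (p + 1 + q - x) := by
  have h1 := (Gamma_p hx p).ne'
  have h2 := (Gamma_p hx q).ne'
  have h3 := (Gamma_p hx (p + q)).ne'
  have h4 := (Real.Gamma_pos_of_pos (sub_pos.2 hx)).ne'
  have h5 := (pos1 hx (p + q)).ne'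
  have e1 := Gamma_step hx p
  have e2 := Gamma_step hx (p + q)
  have e3 : ((p + q + 1 : ℕ) : ℝ) + 1 - x = ((p + 1 : ℕ) : ℝ) + q + 1 - x := by push_cast; ring
  rw [e3] at e2
  unfold Cr
  rw [e1, e2]
  push_cast at *
  have h6 : (p : ℝ) + 1 + q - x ≠ 0 := by convert h5 using 1; ring
  field_simp
  ring

theorem Cr_rec' {x : ℝ} (hx : x < 1) (p q : ℕ) :
    Cr x p q * (q + 1 - x) = Cr x p (q + 1) * (q + 1 + p - x) := by
  rw [Cr_symm x p q, Cr_symm x p (q + 1)]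
  exact Cr_rec hx q p

theorem Cr_swap {x : ℝ} (hx : x < 1) (p q : ℕ) :
    Cr x p (q + 1) * (p + 1 - x) = Cr x (p + 1) q * (q + 1 - x) := by
  have h1 := Cr_rec hx p q
  have h2 := Cr_rec' hx p q
  have h3 := pos1 hx (p + q)
  push_cast at h3
  have h3' : (p : ℝ) + 1 + q - x ≠ 0 := by
    have : (p : ℝ) + 1 + q - x = p + q + 1 - x := by ring
    rw [this]; exact h3.ne'
  apply mul_right_cancel₀ h3'
  linear_combination (q + 1 - x) * h1 - (p + 1 - x) * h2

theorem Cr_sub {x : ℝ} (hx : x < 1) (p q : ℕ) :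
    Cr x p q - Cr x (p + 1) q = q * (Cr x (p + 1) q / (p + 1 - x)) := by
  have h1 := Cr_rec hx p q
  have h3 := (pos1 hx p).ne'
  field_simp
  linear_combination h1

theorem Cr_anti {x : ℝ} (hx : x < 1) (p q : ℕ) : Cr x (p + 1) q ≤ Cr x p q := by
  rw [← sub_nonneg, Cr_sub hx]
  have h1 := Cr_pos hx (p + 1) q
  have h2 := pos1 hx p
  positivity

theorem Cr_anti' {x : ℝ} (hx : x < 1) (p q : ℕ) : Cr x p (q + 1) ≤ Cr x p q := by
  rw [Cr_symm x p q, Cr_symm x p (q + 1)]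
  exact Cr_anti hx q p

theorem Cr_le {x : ℝ} (hx : x < 1) (p q : ℕ) : Cr x p (q + 1) ≤ (1 - x) * (1 / ((p : ℝ) + 1 - x)) := by
  induction q with
  | zero =>
    have h1 := Cr_rec' hx p 0
    rw [Cr_symm x p 0, Cr_zero hx] at h1
    have h2 := pos1 hx p
    rw [mul_one_div, le_div_iff₀ h2]
    push_cast at h1
    simp only [zero_add] at *
    linarith
  | succ q ih => exact (Cr_anti' hx p (q + 1)).trans ih

theorem tail {x : ℝ} (hx : x < 1) (i q : ℕ) :
    ∑' d, U x (i + d) * ENNReal.ofReal (Cr x (i + d + 1) (q + 1)) =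
      V q * ENNReal.ofReal (Cr x i (q + 1)) := by
  have ht := tele (fun d => Cr x (i + d) (q + 1)) (fun d => Cr_anti hx (i + d) (q + 1)) (by
    apply squeeze_zero (fun d => (Cr_pos hx _ _).le) (fun d => Cr_le hx (i + d) q)
    simpa only [mul_zero] using (U_tendsto x i).const_mul (1 - x))
  simp only [add_zero] at ht
  rw [← ht, ← ENNReal.tsum_mul_left]
  congr 1
  ext d
  have h1 := pos1 hx (i + d)
  have h2 := Cr_pos hx (i + d + 1) (q + 1)
  have h3 := pos1 zero_lt_one q
  have h4 := Cr_sub hx (i + d) (q + 1)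
  have i1 : i + (d + 1) = i + d + 1 := by ring
  rw [i1, h4]
  unfold V U
  rw [← ENNReal.ofReal_mul (by positivity), ← ENNReal.ofReal_mul (by positivity)]
  congr 1
  push_cast at *
  simp only [sub_zero] at *
  field_simp

noncomputable def cc (x : ℝ) (p q : ℕ) : ℝ≥0∞ := ENNReal.ofReal (Cr x (p + 1) (q + 1))

theorem cc_symm (x : ℝ) (p q : ℕ) : cc x p q = cc x q p := by
  unfold cc; rw [Cr_symm]

theorem cc_tail {x : ℝ} (hx : x < 1) (i q : ℕ) :
    ∑' d, U x (i + d + 1) * cc x (i + d + 1) q = V q * cc x i q := by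
  have := tail hx (i + 1) q
  have i1 : ∀ d, i + 1 + d = i + d + 1 := by intro d; ring
  simp_rw [i1] at this
  exact this

theorem cc_all {x : ℝ} (hx : x < 1) (q : ℕ) :
    ∑' d, U x d * cc x d q = V q := by
  have := tail hx 0 q
  simpa [Cr_zero hx, cc] using this

theorem cc_two {x : ℝ} (hx : x < 1) (i q : ℕ) :
    U x q * V i * ∑' d, U x (i + d) * cc x (i + d) q =
      V q * U x i * ∑' d, U x (q + d) * cc x i (q + d) := by
  have h1 := tail hx i q
  have h2 := tail hx q i
  have e1 : ∀ d, cc x i (q + d) = ENNReal.ofReal (Cr x (q + d + 1) (i + 1)) := by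
    intro d; rw [cc_symm]; rfl
  have e2 : ∀ d, cc x (i + d) q = ENNReal.ofReal (Cr x (i + d + 1) (q + 1)) := fun d => rfl
  simp_rw [e1, e2]
  rw [h1, h2]
  have h3 : U x q * ENNReal.ofReal (Cr x i (q + 1)) = U x i * ENNReal.ofReal (Cr x q (i + 1)) := by
    have h4 := Cr_swap hx i q
    have h5 := pos1 hx i
    have h6 := pos1 hx q
    unfold U
    rw [← ENNReal.ofReal_mul (by positivity), ← ENNReal.ofReal_mul (by positivity)]
    congr 1
    rw [Cr_symm x q (i + 1)]
    field_simp
    linear_combination h4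
  calc _ = V i * V q * (U x q * ENNReal.ofReal (Cr x i (q + 1))) := by ring
    _ = _ := by rw [h3]; ring

/-- transport operator -/
noncomputable def T (x : ℝ) (f : ℕ → ℝ≥0∞) (q : ℕ) : ℝ≥0∞ := ∑' k, U x k * cc x k q * f k

theorem T_one {x : ℝ} (hx : x < 1) (q : ℕ) : T x (fun _ => 1) q = V q := by
  unfold T; simpa using cc_all hx q

theorem T_add (x : ℝ) (f g : ℕ → ℝ≥0∞) (q : ℕ) :
    T x (fun k => f k + g k) q = T x f q + T x g q := by
  unfold T; rw [← ENNReal.tsum_add]; congr 1; ext k; ring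

theorem T_smul (x : ℝ) (a : ℝ≥0∞) (f : ℕ → ℝ≥0∞) (q : ℕ) :
    T x (fun k => a * f k) q = a * T x f q := by
  unfold T; rw [← ENNReal.tsum_mul_left]; congr 1; ext k; ring

theorem T_I {x : ℝ} (hx : x < 1) (f : ℕ → ℝ≥0∞) (q : ℕ) :
    T x (fun k => ∑ i ∈ range k, U x i * f i) q = V q * T x f q := by
  unfold T
  simp_rw [Finset.mul_sum]
  rw [tri_lt (fun k i => U x k * cc x k q * (U x i * f i)), ← ENNReal.tsum_mul_left]
  congr 1
  ext i
  rw [ENNReal.tsum_mul_right, cc_tail hx]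
  ring

theorem T_II {x : ℝ} (hx : x < 1) (f : ℕ → ℝ≥0∞) (q : ℕ) :
    U x q * T x (fun k => ∑ i ∈ range (k + 1), V i * f i) q =
      V q * ∑' d, U x (q + d) * T x f (q + d) := by
  unfold T
  simp_rw [Finset.mul_sum]
  rw [tri_le (fun k i => U x k * cc x k q * (V i * f i))]
  simp_rw [ENNReal.tsum_mul_right, ← ENNReal.tsum_mul_left]
  rw [ENNReal.tsum_comm (f := fun a b => V q * (U x (q + a) * (U x b * cc x b (q + a) * f b)))]
  congr 1
  ext i
  have := cc_two hx i q
  calc _ = (U x q * V i * ∑' d, U x (i + d) * cc x (i + d) q) * f i := by ring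
    _ = _ := by
      rw [this, mul_right_comm, ← ENNReal.tsum_mul_left]
      congr 1
      ext d
      ring

theorem T_III {x : ℝ} (hx : x < 1) (f : ℕ → ℝ≥0∞) (q : ℕ) :
    T x (fun k => V k * f k) q = ∑' d, U x (q + d + 1) * T x f (q + d + 1) := by
  unfold T
  simp_rw [← ENNReal.tsum_mul_left]
  rw [ENNReal.tsum_comm (f := fun a b => (U x (q + a + 1) * (U x b * cc x b (q + a + 1) * f b)))]
  congr 1
  ext k
  have := cc_tail hx q k
  calc _ = U x k * f k * (V k * cc x q k) := by rw [cc_symm]; ring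
    _ = _ := by
      rw [← this, ← ENNReal.tsum_mul_left]
      congr 1
      ext d
      rw [cc_symm]
      ring

theorem T_pair (x : ℝ) (f g : ℕ → ℝ≥0∞) :
    ∑' q, U x q * g q * T x f q = ∑' k, U x k * f k * T x g k := by
  unfold T
  simp_rw [← ENNReal.tsum_mul_left]
  rw [ENNReal.tsum_comm]
  congr 1
  ext k
  congr 1
  ext q
  rw [cc_symm]
  ring

theorem T_V {x : ℝ} (hx : x < 1) (f : ℕ → ℝ≥0∞) :
    ∑' k, U x k * V k * f k = ∑' q, U x q * T x f q := by
  have := T_pair x f (fun _ => 1)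
  simp_rw [T_one hx] at this
  simp only [mul_one] at this
  rw [this]
  congr 1
  ext k
  ring

/-- double sums over `n > m` -/
noncomputable def br (x : ℝ) (a b c d : ℕ) : ℝ≥0∞ :=
  ∑' n, ∑ m ∈ range n, U x n ^ a * V n ^ b * (U x m ^ c * V m ^ d)

noncomputable def dg (x : ℝ) (a b : ℕ) : ℝ≥0∞ := ∑' n, U x n ^ a * V n ^ b

noncomputable def H2 (n : ℕ) : ℝ≥0∞ := ∑ i ∈ range n, V i * V i

noncomputable def B2 (x : ℝ) : ℝ≥0∞ :=
  ∑' n, U x n ^ 2 * ∑' d, U x (n + d + 1) * V (n + d + 1) * ∑ i ∈ range (d + 1), V (n + i + 1)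

theorem br_eq (x : ℝ) (a b c d : ℕ) : br x a b c d =
    ∑' m, (U x m ^ c * V m ^ d) * ∑' e, U x (m + e + 1) ^ a * V (m + e + 1) ^ b := by
  unfold br
  rw [tri_lt (fun n m => U x n ^ a * V n ^ b * (U x m ^ c * V m ^ d))]
  congr 1
  ext m
  rw [ENNReal.tsum_mul_right, mul_comm]

theorem hS (x : ℝ) (k : ℕ) : h x k * S x k =
    ∑ n ∈ range k, U x n * S x n + ∑ i ∈ range (k + 1), V i * (h x (i + 1) * h x i) := by
  induction k with
  | zero => simp [h]
  | succ k ih =>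
    rw [Finset.sum_range_succ _ k, Finset.sum_range_succ _ (k + 1)]
    have e1 : S x (k + 1) = S x k + V (k + 1) * h x (k + 1 + 1) := by
      unfold S; rw [Finset.sum_range_succ _ (k + 1)]
    have e2 : h x (k + 1) = h x k + U x k := by
      unfold h; rw [Finset.sum_range_succ]
    calc _ = h x k * S x k + U x k * S x k + V (k + 1) * (h x (k + 1 + 1) * h x (k + 1)) := by
          rw [e1, e2]
          ring
      _ = _ := by rw [ih]; ring

theorem h_sq (x : ℝ) (k : ℕ) : h x k * h x k = ∑ n ∈ range k, U x n * (2 * h x n + U x n) := by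
  induction k with
  | zero => simp [h]
  | succ k ih =>
    rw [Finset.sum_range_succ, ← ih]
    have e2 : h x (k + 1) = h x k + U x k := by
      unfold h; rw [Finset.sum_range_succ]
    rw [e2]; ring

theorem h_succ (x : ℝ) (k : ℕ) : h x (k + 1) = h x k + U x k := by
  unfold h; rw [Finset.sum_range_succ]

theorem T_h {x : ℝ} (hx : x < 1) (q : ℕ) : T x (h x) q = V q * V q := by
  have := T_I hx (fun _ => 1) q
  rw [T_one hx] at this
  simp only [mul_one] at this
  exact this

noncomputable def tau (x : ℝ) (q : ℕ) : ℝ≥0∞ := ∑' e, U x (q + e + 1) * V (q + e + 1)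

noncomputable def sig (x : ℝ) (q : ℕ) : ℝ≥0∞ := ∑' e, U x (q + e) * V (q + e)

theorem sig_eq (x : ℝ) (q : ℕ) : sig x q = U x q * V q + tau x q := by
  unfold sig
  rw [← Summable.sum_add_tsum_nat_add' (k := 1) ENNReal.summable]
  simp only [Finset.sum_range_one, add_zero]
  rfl

theorem T_Vv {x : ℝ} (hx : x < 1) (q : ℕ) : T x (fun k => V k) q = tau x q := by
  have := T_III hx (fun _ => 1) q
  simp only [mul_one, T_one hx] at this
  exact this

theorem T_H {x : ℝ} (hx : x < 1) (q : ℕ) :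
    U x q * T x (fun k => h 0 (k + 1)) q = V q * sig x q := by
  have := T_II hx (fun _ => 1) q
  simp only [mul_one, T_one hx] at this
  exact this

theorem T_H2 {x : ℝ} (hx : x < 1) (q : ℕ) :
    U x q * T x (fun k => H2 (k + 1)) q = V q * ∑' d, U x (q + d) * tau x (q + d) := by
  have := T_II hx (fun k => V k) q
  simp only [T_Vv hx] at this
  exact this

theorem W_exp {x : ℝ} (hx : x < 1) : W x = ENNReal.ofReal x * ∑' r, U x r *
    ((V r * V r + T x (U x) r) * H2 (r + 1) +
     (V r * (2 * (V r * V r) + T x (U x) r) + T x (fun k => U x k * h x k) r) * h 0 (r + 1)) := by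
  unfold W
  congr 1
  rw [T_V hx (fun k => h x k * S x k)]
  have e1 : ∀ q, U x q * T x (fun k => h x k * S x k) q =
      ∑' d, (V q * V q * (U x (q + d) * T x (fun k => h x (k + 1)) (q + d)) +
        V q * (U x (q + d) * T x (fun k => h x (k + 1) * h x k) (q + d))) := by
    intro q
    have : (fun k => h x k * S x k) = fun k => (∑ n ∈ range k, U x n * S x n) +
        ∑ i ∈ range (k + 1), V i * (h x (i + 1) * h x i) := by
      ext k; exact hS x k
    rw [this, T_add, T_I hx, mul_add, T_II hx, ENNReal.tsum_add, ENNReal.tsum_mul_left,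
      ENNReal.tsum_mul_left]
    have h2 := T_II hx (fun i => h x (i + 1)) q
    have h3 : T x (S x) q = T x (fun k => ∑ i ∈ range (k + 1), V i * h x (i + 1)) q := rfl
    rw [← h3] at h2
    calc _ = V q * (U x q * T x (S x) q) + V q * ∑' d, U x (q + d) *
          T x (fun i => h x (i + 1) * h x i) (q + d) := by ring
      _ = _ := by rw [h2]; ring
  simp_rw [e1]
  rw [← tri_le (fun r q => (V q * V q * (U x r * T x (fun k => h x (k + 1)) r) +
        V q * (U x r * T x (fun k => h x (k + 1) * h x k) r)))]
  congr 1
  ext r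
  rw [Finset.sum_add_distrib, ← Finset.sum_mul, ← Finset.sum_mul]
  have h1 : T x (fun k => h x (k + 1)) r = V r * V r + T x (U x) r := by
    simp_rw [h_succ]
    rw [T_add]
    congr 1
    exact T_h hx r
  have h2 : T x (fun k => h x (k + 1) * h x k) r =
      V r * (2 * (V r * V r) + T x (U x) r) + T x (fun k => U x k * h x k) r := by
    simp_rw [h_succ, add_mul]
    rw [T_add]
    congr 1
    simp_rw [h_sq]
    rw [T_I hx, T_add, T_smul]
    congr 3
    exact T_h hx r
  rw [h1, h2]
  unfold H2 h
  ring

theorem W_eq {x : ℝ} (hx : x < 1) : W x = ENNReal.ofReal x *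
    (br x 1 2 0 2 + 3 * dg x 1 4 + 2 * br x 1 3 0 1 + br x 1 1 1 2 + br x 1 1 2 1 +
      br x 1 2 1 1 + br x 2 2 1 0 + B2 x) := by
  rw [W_exp hx]
  congr 1
  have s1 : ∑' r, U x r * (V r * V r * H2 (r + 1)) = br x 1 2 0 2 + dg x 1 4 := by
    unfold br dg
    rw [← ENNReal.tsum_add]
    congr 1
    ext r
    rw [← Finset.mul_sum]
    unfold H2
    rw [Finset.sum_range_succ]
    simp only [pow_zero, one_mul, sq]
    ring
  have s2 : ∑' r, U x r * (V r * (V r * V r) * h 0 (r + 1)) = br x 1 3 0 1 + dg x 1 4 := by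
    unfold br dg
    rw [← ENNReal.tsum_add]
    congr 1
    ext r
    rw [← Finset.mul_sum]
    unfold h
    rw [Finset.sum_range_succ]
    simp only [pow_zero, one_mul, pow_one]
    ring
  have s3 : ∑' r, U x r * H2 (r + 1) * T x (U x) r = br x 1 1 1 2 + br x 1 1 2 1 := by
    rw [T_pair x (U x) (fun r => H2 (r + 1))]
    simp_rw [mul_assoc, T_H2 hx, ← ENNReal.tsum_mul_left]
    rw [← tri_le (fun r k => U x k * (V k * (U x r * tau x r)))]
    have : ∀ r, ∑ k ∈ range (r + 1), U x k * (V k * (U x r * tau x r)) =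
        (U x r * ∑ k ∈ range r, U x k * V k) * tau x r + U x r ^ 2 * V r ^ 1 * tau x r := by
      intro r
      rw [Finset.sum_range_succ, Finset.mul_sum, Finset.sum_mul]
      congr 1
      · apply Finset.sum_congr rfl; intro k _; ring
      · ring
    simp_rw [this]
    rw [ENNReal.tsum_add]
    congr 1
    · unfold tau
      simp_rw [← ENNReal.tsum_mul_left]
      rw [← tri_lt (fun t r => (U x r * ∑ k ∈ range r, U x k * V k) * (U x t * V t))]
      have e : ∀ t, ∑ r ∈ range t, (U x r * ∑ k ∈ range r, U x k * V k) * (U x t * V t) =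
          U x t * V t * ∑ r ∈ range t, (U x r * ∑ k ∈ range r, U x k * V k) := by
        intro t
        rw [Finset.mul_sum]
        apply Finset.sum_congr rfl; intro k _; ring
      simp_rw [e]
      rw [T_V hx]
      simp_rw [T_I hx, T_Vv hx]
      rw [br_eq]
      congr 1
      ext q
      unfold tau
      simp only [pow_one]
      ring
    · rw [br_eq]
      simp only [pow_one]
      rfl
  have s4 : ∑' r, U x r * (V r * h 0 (r + 1)) * T x (U x) r = B2 x := by
    rw [T_pair x (U x) (fun r => V r * h 0 (r + 1))]
    simp_rw [T_III hx, T_H hx]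
    unfold B2 sig
    congr 1
    ext n
    rw [sq]
    congr 1
    simp_rw [← ENNReal.tsum_mul_left]
    have := tri_le (fun D d => V (n + d + 1) * (U x (n + D + 1) * V (n + D + 1)))
    have e : ∀ d e, n + (d + e) + 1 = n + d + 1 + e := by intro d e; ring
    simp_rw [e] at this
    rw [← this]
    congr 1
    ext D
    rw [Finset.mul_sum]
    apply Finset.sum_congr rfl; intro k _; ring
  have s5 : ∑' r, U x r * h 0 (r + 1) * T x (fun k => U x k * h x k) r =
      br x 1 2 1 1 + br x 2 2 1 0 := by
    rw [T_pair x (fun k => U x k * h x k) (fun r => h 0 (r + 1))]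
    have : ∀ k, U x k * (U x k * h x k) * T x (fun r => h 0 (r + 1)) k =
        (U x k * (V k * h x k)) * tau x k + U x k ^ 2 * V k ^ 2 * h x k := by
      intro k
      calc _ = U x k * h x k * (U x k * T x (fun r => h 0 (r + 1)) k) := by ring
        _ = _ := by rw [T_H hx, sig_eq]; ring
    simp_rw [this]
    rw [ENNReal.tsum_add]
    congr 1
    · unfold tau
      simp_rw [← ENNReal.tsum_mul_left]
      rw [← tri_lt (fun t r => (U x r * (V r * h x r)) * (U x t * V t))]
      have e : ∀ t, ∑ r ∈ range t, (U x r * (V r * h x r)) * (U x t * V t) =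
          U x t * V t * ∑ r ∈ range t, (U x r * (V r * h x r)) := by
        intro t
        rw [Finset.mul_sum]
        apply Finset.sum_congr rfl; intro k _; ring
      simp_rw [e]
      rw [T_V hx]
      simp_rw [T_I hx, T_III hx, T_h hx]
      rw [br_eq]
      congr 1
      ext q
      simp only [pow_one, sq]
      ring
    · unfold br h
      simp only [pow_zero, pow_one, mul_one, Finset.mul_sum]
  have : ∀ r, U x r * ((V r * V r + T x (U x) r) * H2 (r + 1) +
     (V r * (2 * (V r * V r) + T x (U x) r) + T x (fun k => U x k * h x k) r) * h 0 (r + 1)) =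
     U x r * (V r * V r * H2 (r + 1)) + 2 * (U x r * (V r * (V r * V r) * h 0 (r + 1))) +
     U x r * H2 (r + 1) * T x (U x) r + U x r * (V r * h 0 (r + 1)) * T x (U x) r +
     U x r * h 0 (r + 1) * T x (fun k => U x k * h x k) r := by
    intro r; ring
  simp_rw [this]
  rw [ENNReal.tsum_add, ENNReal.tsum_add, ENNReal.tsum_add, ENNReal.tsum_add,
    ENNReal.tsum_mul_left, s1, s2, s3, s4, s5]
  ring

theorem br_up {x : ℝ} (h0 : 0 ≤ x) (hx : x < 1) (a b c d : ℕ) :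
    br x (a + 1) b c d = br x a (b + 1) c d + ENNReal.ofReal x * br x (a + 1) (b + 1) c d := by
  unfold br
  rw [← ENNReal.tsum_mul_left, ← ENNReal.tsum_add]
  congr 1
  ext n
  rw [Finset.mul_sum, ← Finset.sum_add_distrib]
  apply Finset.sum_congr rfl
  intro m _
  have := U_rel0 h0 hx n
  calc _ = U x n ^ a * V n ^ b * (U x m ^ c * V m ^ d) * U x n := by ring
    _ = U x n ^ a * V n ^ b * (U x m ^ c * V m ^ d) * (V n + ENNReal.ofReal x * U x n * V n) := by
      rw [← this]
    _ = _ := by ring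

theorem br_low {x : ℝ} (h0 : 0 ≤ x) (hx : x < 1) (a b c d : ℕ) :
    br x a b (c + 1) d = br x a b c (d + 1) + ENNReal.ofReal x * br x a b (c + 1) (d + 1) := by
  unfold br
  rw [← ENNReal.tsum_mul_left, ← ENNReal.tsum_add]
  congr 1
  ext n
  rw [Finset.mul_sum, ← Finset.sum_add_distrib]
  apply Finset.sum_congr rfl
  intro m _
  have := U_rel0 h0 hx m
  calc _ = U x n ^ a * V n ^ b * (U x m ^ c * V m ^ d) * U x m := by ring
    _ = U x n ^ a * V n ^ b * (U x m ^ c * V m ^ d) * (V m + ENNReal.ofReal x * U x m * V m) := by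
      rw [← this]
    _ = _ := by ring

theorem dg_up {x : ℝ} (h0 : 0 ≤ x) (hx : x < 1) (a b : ℕ) :
    dg x (a + 1) b = dg x a (b + 1) + ENNReal.ofReal x * dg x (a + 1) (b + 1) := by
  unfold dg
  rw [← ENNReal.tsum_mul_left, ← ENNReal.tsum_add]
  congr 1
  ext n
  have := U_rel0 h0 hx n
  calc _ = U x n ^ a * V n ^ b * U x n := by ring
    _ = U x n ^ a * V n ^ b * (V n + ENNReal.ofReal x * U x n * V n) := by
      rw [← this]
    _ = _ := by ring

/-- `Σ_d v_d v_{m+d+1} = v_m H_{m+1}`. -/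
theorem sumVV (m : ℕ) : ∑' d, V d * V (m + d + 1) = V m * h 0 (m + 1) := by
  have := L_sum zero_lt_one 0 m
  simp only [zero_add] at this
  unfold h
  rw [← this]
  congr 1
  ext d
  rw [add_comm m d]

theorem sum_flip (n : ℕ) : ∑ m ∈ range n, V (n - 1 - m) = h 0 n :=
  Finset.sum_range_reflect (fun i => V i) n

/-- identity P2 -/
theorem P2 {x : ℝ} (hx : x < 1) :
    br x 2 1 1 0 + br x 1 1 2 0 + br x 2 1 0 1 = br x 2 1 0 1 + dg x 2 2 := by
  have hA : ∑' m, ∑' d, (V (m + d + 1) * (V d * U x (m + d + 1) ^ 2)) = br x 2 1 0 1 := by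
    have := tri_lt (fun n m => V n * (V (n - 1 - m) * U x n ^ 2))
    have e : ∀ m d, m + d + 1 - 1 - m = d := by intro m d; omega
    simp only [e] at this
    rw [← this]
    unfold br
    congr 1
    ext n
    rw [← Finset.mul_sum, ← Finset.mul_sum, ← Finset.sum_mul, sum_flip]
    unfold h
    simp only [pow_zero, pow_one, one_mul]
    ring
  have hB : ∑' m, ∑' d, (U x m ^ 2 * (V d * V (m + d + 1))) = br x 2 1 0 1 + dg x 2 2 := by
    simp_rw [ENNReal.tsum_mul_left, sumVV]
    unfold br dg
    rw [← ENNReal.tsum_add]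
    congr 1
    ext n
    rw [← Finset.mul_sum, h_succ]
    unfold h
    simp only [pow_zero, pow_one, one_mul]
    ring
  rw [← hB, ← hA]
  unfold br
  rw [tri_lt, tri_lt, ← ENNReal.tsum_add, ← ENNReal.tsum_add]
  congr 1
  ext m
  rw [← ENNReal.tsum_add, ← ENNReal.tsum_add]
  congr 1
  ext d
  have := U_pf hx m d
  calc _ = V (m + d + 1) * (U x m ^ 2 * U x (m + d + 1) + U x (m + d + 1) *
        (U x m * U x (m + d + 1) + V d * U x (m + d + 1))) := by ring
    _ = V (m + d + 1) * (U x m ^ 2 * U x (m + d + 1) + U x (m + d + 1) * (V d * U x m)) := by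
      rw [this]
    _ = V (m + d + 1) * (U x m * (U x m * U x (m + d + 1) + V d * U x (m + d + 1))) := by
      ring
    _ = _ := by rw [this]; ring

theorem P1_pt {x : ℝ} (h0 : 0 ≤ x) (hx : x < 1) (m d : ℕ) :
    ENNReal.ofReal x * (U x (m + d + 1) * V (m + d + 1) * (U x m * V m ^ 2)) +
      V m ^ 2 * (V d * U x (m + d + 1)) = V m * U x m * (V d * V (m + d + 1)) := by
  have h1 := pos1 hx m
  have h2 := pos1 zero_lt_one d
  have h3 := pos1 hx (m + d + 1)
  have h4 := pos1 zero_lt_one m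
  have h5 := pos1 zero_lt_one (m + d + 1)
  unfold V U
  push_cast at *
  simp only [sub_zero] at *
  simp only [← ENNReal.ofReal_mul (one_div_pos.2 h1).le,
    ← ENNReal.ofReal_mul (one_div_pos.2 h2).le, ← ENNReal.ofReal_mul (one_div_pos.2 h3).le,
    ← ENNReal.ofReal_pow (one_div_pos.2 h4).le, ← ENNReal.ofReal_mul (one_div_pos.2 h4).le]
  rw [← ENNReal.ofReal_mul (by positivity), ← ENNReal.ofReal_mul (by positivity),
    ← ENNReal.ofReal_mul (by positivity), ← ENNReal.ofReal_mul (by positivity),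
    ← ENNReal.ofReal_add (by positivity) (by positivity)]
  congr 1
  field_simp
  ring

theorem P1_fin (n : ℕ) : ∑ m ∈ range n, V m ^ 2 * V (n - 1 - m) =
    V n * (H2 n + 2 * (V n * h 0 n)) := by
  have : ∀ m ∈ range n, V m ^ 2 * V (n - 1 - m) =
      V n * (V m * V m) + V n * V n * V m + V n * V n * V (n - 1 - m) := by
    intro m hm
    have hm' := Finset.mem_range.1 hm
    have e := U_shuf zero_lt_one zero_lt_one m (n - 1 - m)
    rw [show m + (n - 1 - m) + 1 = n by omega, add_zero] at e
    calc _ = V m * (V m * V (n - 1 - m)) := by ring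
      _ = V m * (V n * (V m + V (n - 1 - m))) := by rw [e]
      _ = V n * (V m * V m) + V n * (V m * V (n - 1 - m)) := by ring
      _ = _ := by rw [e]; ring
  rw [Finset.sum_congr rfl this, Finset.sum_add_distrib, Finset.sum_add_distrib, ← Finset.mul_sum,
    ← Finset.mul_sum, ← Finset.mul_sum, sum_flip]
  unfold H2 h
  ring

theorem P1 {x : ℝ} (h0 : 0 ≤ x) (hx : x < 1) :
    ENNReal.ofReal x * br x 1 1 1 2 + (br x 1 1 0 2 + 2 * br x 1 2 0 1) =
      br x 1 2 0 1 + dg x 1 3 := by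
  have hA : ∑' m, ∑' d, V m ^ 2 * (V d * U x (m + d + 1)) = br x 1 1 0 2 + 2 * br x 1 2 0 1 := by
    have := tri_lt (fun n m => V m ^ 2 * (V (n - 1 - m) * U x n))
    have e : ∀ m d, m + d + 1 - 1 - m = d := by intro m d; omega
    simp only [e] at this
    rw [← this]
    unfold br
    rw [← ENNReal.tsum_mul_left, ← ENNReal.tsum_add]
    congr 1
    ext n
    simp_rw [← mul_assoc]
    rw [← Finset.sum_mul, P1_fin]
    simp only [← Finset.mul_sum, pow_zero, pow_one, mul_one, one_mul]
    unfold h H2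
    simp only [sq]
    ring
  have hB : ∑' m, ∑' d, V m * U x m * (V d * V (m + d + 1)) = br x 1 2 0 1 + dg x 1 3 := by
    simp_rw [ENNReal.tsum_mul_left, sumVV]
    unfold br dg
    rw [← ENNReal.tsum_add]
    congr 1
    ext n
    rw [← Finset.mul_sum, h_succ]
    unfold h
    simp only [pow_zero, pow_one, one_mul]
    ring
  rw [← hB, ← hA]
  unfold br
  rw [tri_lt, ← ENNReal.tsum_mul_left, ← ENNReal.tsum_add]
  congr 1
  ext m
  rw [← ENNReal.tsum_mul_left, ← ENNReal.tsum_add]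
  congr 1
  ext d
  rw [← P1_pt h0 hx m d]
  ring

noncomputable def ee (x : ℝ) (K : ℕ) : ℝ≥0∞ := ∑ n ∈ range K, U x n * h x n

noncomputable def EE (x : ℝ) : ℝ≥0∞ := ∑' K, V K ^ 2 * ee x K

theorem T_ee {x : ℝ} (hx : x < 1) (q : ℕ) : T x (ee x) q = V q ^ 3 := by
  have := T_I hx (h x) q
  rw [T_h hx] at this
  unfold ee
  rw [this]; ring

theorem E_eq {x : ℝ} (h0 : 0 ≤ x) (hx : x < 1) :
    EE x + ENNReal.ofReal x * br x 1 3 1 0 = dg x 1 3 := by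
  have h1 : dg x 1 3 = ∑' K, U x K * V K * ee x K := by
    rw [T_V hx]
    unfold dg
    simp only [pow_one, T_ee hx]
  have h2 : br x 1 3 1 0 = ∑' K, U x K * V K * (V K * ee x K) := by
    rw [T_V hx]
    simp_rw [T_III hx, T_ee hx]
    rw [br_eq]
    simp only [pow_one, pow_zero, mul_one]
  rw [h1, h2, EE, ← ENNReal.tsum_mul_left, ← ENNReal.tsum_add]
  congr 1
  ext K
  have := U_rel0 h0 hx K
  calc _ = (V K + ENNReal.ofReal x * U x K * V K) * (V K * ee x K) := by ring
    _ = _ := by rw [← this]; ring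

theorem h_ne_top (x : ℝ) (n : ℕ) : h x n ≠ ∞ := by
  unfold h
  rw [ne_eq, ENNReal.sum_eq_top]
  push Not
  intro i _
  exact U_ne_top x i

theorem sum_ne_top' {f : ℕ → ℝ≥0∞} (hf : ∀ i, f i ≠ ∞) (n : ℕ) : ∑ i ∈ range n, f i ≠ ∞ := by
  rw [ne_eq, ENNReal.sum_eq_top]
  push Not
  intro i _
  exact hf i

theorem R1 {x : ℝ} (hx : x < 1) (K : ℕ) :
    ∑ N ∈ range K, V (K - 1 - N) * U x N = U x K * (h 0 K + h x K) := by
  have : ∀ N ∈ range K, V (K - 1 - N) * U x N = U x K * (V (K - 1 - N) + U x N) := by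
    intro N hN
    have hN' := Finset.mem_range.1 hN
    have := U_shuf zero_lt_one hx (K - 1 - N) N
    rw [show K - 1 - N + N + 1 = K by omega, zero_add] at this
    exact this
  rw [Finset.sum_congr rfl this, ← Finset.mul_sum, Finset.sum_add_distrib, sum_flip]
  rfl

theorem R2 {x : ℝ} (hx : x < 1) (K : ℕ) :
    ∑ N ∈ range K, V (K - 1 - N) * h x N = ∑ N ∈ range K, U x N * (h x N + h 0 N) := by
  induction K with
  | zero => simp
  | succ K ih =>
    rw [Finset.sum_range_succ (fun N => U x N * (h x N + h 0 N)), ← ih, Finset.sum_range_succ']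
    have e : h x 0 = 0 := by simp [h]
    rw [e, mul_zero, add_zero, add_comm (h x K), ← R1 hx, ← Finset.sum_add_distrib]
    apply Finset.sum_congr rfl
    intro N hN
    rw [show K + 1 - 1 - (N + 1) = K - 1 - N by omega, h_succ]
    ring

theorem R3 (x : ℝ) (K : ℕ) :
    h 0 K * h x K = ∑ N ∈ range K, (V N * h x N + U x N * h 0 N + U x N * V N) := by
  induction K with
  | zero => simp [h]
  | succ K ih =>
    rw [Finset.sum_range_succ, ← ih, h_succ, h_succ]
    ring

theorem h_split (x : ℝ) (a b : ℕ) : h x (a + b) = h x a + ∑ l ∈ range b, U x (a + l) := by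
  unfold h
  rw [Finset.sum_range_add]

theorem FD (n : ℕ) : ∑ j ∈ range n, V (n - 1 - j) * ∑ l ∈ range (n - j), V (j + l) = H2 n := by
  have h1 : ∑ j ∈ range n, V (n - 1 - j) * h 0 n = ∑ j ∈ range n, V (n - 1 - j) * h 0 j +
      ∑ j ∈ range n, V (n - 1 - j) * ∑ l ∈ range (n - j), V (j + l) := by
    rw [← Finset.sum_add_distrib]
    apply Finset.sum_congr rfl
    intro j hj
    have := Finset.mem_range.1 hj
    rw [← mul_add, ← h_split, show j + (n - j) = n by omega]
  rw [← Finset.sum_mul, sum_flip, R3, R2 zero_lt_one] at h1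
  have h2 : ∑ N ∈ range n, (V N * h 0 N + U 0 N * h 0 N + U 0 N * V N) =
      ∑ N ∈ range n, U 0 N * (h 0 N + h 0 N) + H2 n := by
    unfold H2
    rw [← Finset.sum_add_distrib]
    apply Finset.sum_congr rfl
    intro N _
    ring
  rw [h2] at h1
  have hf : ∑ N ∈ range n, U 0 N * (h 0 N + h 0 N) ≠ ∞ := sum_ne_top' (fun i =>
    ENNReal.mul_ne_top (U_ne_top 0 i) (ENNReal.add_ne_top.2 ⟨h_ne_top 0 i, h_ne_top 0 i⟩)) n
  exact ((ENNReal.add_right_inj hf).1 h1).symm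

theorem I1 (n : ℕ) : ∑' d, ((n : ℝ≥0∞) + 1) * (V d * V (n + d + 1)) *
    ∑ i ∈ range (d + 1), V (n + i + 1) = H2 (n + 1) := by
  simp_rw [Finset.mul_sum]
  rw [tri_le (fun d i => ((n : ℝ≥0∞) + 1) * (V d * V (n + d + 1)) * V (n + i + 1))]
  have e1 : ∀ i, ∑' e, ((n : ℝ≥0∞) + 1) * (V (i + e) * V (n + (i + e) + 1)) * V (n + i + 1) =
      ∑ j ∈ range (n + 1), V (n + i + 1) * V (i + j) := by
    intro i
    have := L_sum zero_lt_one i n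
    have e : ∀ e, n + (i + e) + 1 = i + e + n + 1 := by intro e; ring
    simp_rw [e]
    rw [ENNReal.tsum_mul_right, ENNReal.tsum_mul_left, this, ← mul_assoc, V_mul, one_mul, mul_comm,
      Finset.mul_sum]
  simp_rw [e1]
  rw [Summable.tsum_finsetSum (fun _ _ => ENNReal.summable), ← FD]
  apply Finset.sum_congr rfl
  intro j hj
  have hj' := Finset.mem_range.1 hj
  have := L_sum zero_lt_one j (n - j)
  rw [show n + 1 - 1 - j = n - j by omega, show n + 1 - j = n - j + 1 by omega, ← this]
  congr 1
  ext i
  rw [show j + i + (n - j) + 1 = n + i + 1 by omega, add_comm j i, mul_comm]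

noncomputable def MM (x : ℝ) : ℝ≥0∞ :=
  ∑' n, ∑' d, U x n * U x (n + d + 1) * (V d * ∑ i ∈ range (d + 1), V (n + i + 1))

theorem B2_pt {x : ℝ} (h0 : 0 ≤ x) (hx : x < 1) (n d : ℕ) :
    ENNReal.ofReal x * (U x (n + d + 1) * V (n + d + 1) * U x n ^ 2) +
      U x n * U x (n + d + 1) * V d = U x n ^ 2 * (((n : ℝ≥0∞) + 1) * (V d * V (n + d + 1))) := by
  have h1 := pos1 hx n
  have h2 := pos1 zero_lt_one d
  have h3 := pos1 hx (n + d + 1)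
  have h4 := pos1 zero_lt_one n
  have h5 := pos1 zero_lt_one (n + d + 1)
  have hn : ((n : ℝ≥0∞) + 1) = ENNReal.ofReal ((n : ℝ) + 1) := by
    rw [ENNReal.ofReal_add (by positivity) (by positivity)]; simp
  rw [hn]
  unfold V U
  push_cast at *
  simp only [sub_zero] at *
  simp only [← ENNReal.ofReal_mul (one_div_pos.2 h1).le, ← ENNReal.ofReal_pow (one_div_pos.2 h1).le,
    ← ENNReal.ofReal_mul (one_div_pos.2 h2).le, ← ENNReal.ofReal_mul (one_div_pos.2 h3).le,
    ← ENNReal.ofReal_mul h4.le]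
  rw [← ENNReal.ofReal_mul (by positivity), ← ENNReal.ofReal_mul (by positivity),
    ← ENNReal.ofReal_mul (by positivity), ← ENNReal.ofReal_mul (by positivity),
    ← ENNReal.ofReal_add (by positivity) (by positivity)]
  congr 1
  field_simp
  ring

theorem B2_eq {x : ℝ} (h0 : 0 ≤ x) (hx : x < 1) :
    ENNReal.ofReal x * B2 x + MM x = br x 2 0 0 2 + dg x 2 2 := by
  have h1 : br x 2 0 0 2 + dg x 2 2 = ∑' n, U x n ^ 2 * H2 (n + 1) := by
    unfold br dg
    rw [← ENNReal.tsum_add]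
    congr 1
    ext n
    rw [← Finset.mul_sum]
    unfold H2
    rw [Finset.sum_range_succ]
    simp only [pow_zero, one_mul, mul_one, sq]
    ring
  rw [h1]
  unfold B2 MM
  rw [← ENNReal.tsum_mul_left, ← ENNReal.tsum_add]
  congr 1
  ext n
  rw [← I1, ← ENNReal.tsum_mul_left, ← ENNReal.tsum_mul_left, ← ENNReal.tsum_mul_left,
    ← ENNReal.tsum_add]
  congr 1
  ext d
  have := B2_pt h0 hx n d
  calc _ = (ENNReal.ofReal x * (U x (n + d + 1) * V (n + d + 1) * U x n ^ 2) +
      U x n * U x (n + d + 1) * V d) * ∑ i ∈ range (d + 1), V (n + i + 1) := by ring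
    _ = _ := by rw [this]; ring

theorem F_in {x : ℝ} (hx : x < 1) (N g : ℕ) :
    ∑ n ∈ range N, U x n * U x (n + g + 1) + V g * h x (g + 1 + N) =
      V g * (h x N + h x (g + 1)) := by
  have h1 : ∑ n ∈ range N, U x n * U x (n + g + 1) + V g * ∑ n ∈ range N, U x (g + 1 + n) =
      V g * h x N := by
    unfold h
    rw [Finset.mul_sum, Finset.mul_sum, ← Finset.sum_add_distrib]
    apply Finset.sum_congr rfl
    intro n _
    rw [← U_pf hx n g, show g + 1 + n = n + g + 1 by ring]
  rw [h_split, mul_add, mul_add, ← h1]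
  ring

theorem F_eq {x : ℝ} (hx : x < 1) (K : ℕ) :
    ∑ N ∈ range K, V N * ∑ n ∈ range N, U x n * U x (n + (K - 1 - N) + 1) +
      V K * ∑ n ∈ range K, U x n * V n = V K * (2 * ee x K + U x K * (h 0 K + h x K)) := by
  set F := ∑ N ∈ range K, V N * ∑ n ∈ range N, U x n * U x (n + (K - 1 - N) + 1) with hF
  have hV : ∀ N ∈ range K, V N * V (K - 1 - N) = V K * (V N + V (K - 1 - N)) := by
    intro N hN
    have hN' := Finset.mem_range.1 hN
    have := U_shuf zero_lt_one zero_lt_one N (K - 1 - N)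
    rw [show N + (K - 1 - N) + 1 = K by omega, zero_add] at this
    exact this
  have h1 : F + ∑ N ∈ range K, V N * V (K - 1 - N) * h x K =
      ∑ N ∈ range K, V N * V (K - 1 - N) * (h x N + h x (K - 1 - N + 1)) := by
    rw [hF, ← Finset.sum_add_distrib]
    apply Finset.sum_congr rfl
    intro N hN
    have hN' := Finset.mem_range.1 hN
    have := F_in hx N (K - 1 - N)
    rw [show K - 1 - N + 1 + N = K by omega] at this
    rw [mul_assoc, mul_assoc, ← mul_add, this]
  have h2 : ∑ N ∈ range K, V N * V (K - 1 - N) * h x K = V K * (2 * (h 0 K * h x K)) := by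
    rw [← Finset.sum_mul, Finset.sum_congr rfl hV, ← Finset.mul_sum, Finset.sum_add_distrib, sum_flip]
    unfold h
    ring
  have h3 : ∑ N ∈ range K, V N * V (K - 1 - N) * h x (K - 1 - N + 1) =
      ∑ N ∈ range K, V N * V (K - 1 - N) * h x (N + 1) := by
    rw [← Finset.sum_range_reflect (fun N => V N * V (K - 1 - N) * h x (N + 1))]
    apply Finset.sum_congr rfl
    intro N hN
    have hN' := Finset.mem_range.1 hN
    rw [show K - 1 - (K - 1 - N) = N by omega]
    ring
  have h4 : ∑ N ∈ range K, V N * V (K - 1 - N) * (h x N + h x (K - 1 - N + 1)) =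
      V K * (∑ N ∈ range K, (2 * (V N * h x N) + U x N * V N) +
        (2 * ∑ N ∈ range K, V (K - 1 - N) * h x N) + ∑ N ∈ range K, V (K - 1 - N) * U x N) := by
    simp_rw [mul_add]
    rw [Finset.sum_add_distrib, h3, ← Finset.sum_add_distrib, ← mul_add, ← mul_add, Finset.mul_sum,
      ← Finset.sum_add_distrib, ← Finset.sum_add_distrib, Finset.mul_sum]
    apply Finset.sum_congr rfl
    intro N hN
    rw [hV N hN, h_succ]
    ring
  rw [h2, h4, R1 hx, R2 hx, R3] at h1
  set C := V K * ∑ N ∈ range K, (2 * (V N * h x N) + 2 * (U x N * h 0 N) + U x N * V N) with hC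
  have hCf : C ≠ ∞ := by
    apply ENNReal.mul_ne_top (U_ne_top 0 K)
    apply sum_ne_top'
    intro i
    have := U_ne_top x i
    have := U_ne_top 0 i
    have := h_ne_top x i
    have := h_ne_top 0 i
    finiteness
  apply (ENNReal.add_left_inj hCf).1
  calc _ = F + V K * (2 * ∑ N ∈ range K, (V N * h x N + U x N * h 0 N + U x N * V N)) := by
        rw [hC, add_assoc, ← mul_add, ← Finset.sum_add_distrib, Finset.mul_sum _ _ 2]
        congr 3
        ext N
        ring
    _ = _ := by
        rw [h1, hC, ← mul_add]
        congr 1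
        unfold ee
        simp only [mul_add, Finset.sum_add_distrib, ← Finset.mul_sum]
        ring

theorem M_eq {x : ℝ} (hx : x < 1) :
    MM x + br x 0 2 1 1 = 2 * EE x + br x 1 2 0 1 + br x 1 2 1 0 := by
  have hM : MM x = ∑' K, V K * ∑ N ∈ range K, V N *
      ∑ n ∈ range N, U x n * U x (n + (K - 1 - N) + 1) := by
    simp_rw [Finset.mul_sum (range _) _ (V _)]
    rw [tri_lt (fun K N => ∑ n ∈ range N, V K * (V N * (U x n * U x (n + (K - 1 - N) + 1)))),
      ENNReal.tsum_comm]
    have e : ∀ d b, b + d + 1 - 1 - b = d := by intro d b; omega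
    simp only [e]
    unfold MM
    rw [ENNReal.tsum_comm]
    congr 1
    ext d
    have := tri_lt (fun N n => V (N + d + 1) * (V N * (U x n * U x (n + d + 1))))
    simp_rw [← Finset.mul_sum] at this ⊢
    rw [this]
    congr 1
    ext n
    have h2 := L_sum zero_lt_one (n + 1) d
    have e2 : ∀ i, n + 1 + i = n + i + 1 := by intro i; ring
    simp_rw [e2] at h2
    rw [← h2, ← ENNReal.tsum_mul_left]
    congr 1
    ext r
    ring
  rw [hM]
  unfold br EE
  rw [← ENNReal.tsum_mul_left, ← ENNReal.tsum_add, ← ENNReal.tsum_add, ← ENNReal.tsum_add]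
  congr 1
  ext K
  have := F_eq hx K
  simp only [pow_zero, pow_one, mul_one, one_mul, ← Finset.mul_sum]
  calc _ = V K * (∑ N ∈ range K, V N * ∑ n ∈ range N, U x n * U x (n + (K - 1 - N) + 1) +
      V K * ∑ n ∈ range K, U x n * V n) := by ring
    _ = _ := by rw [this]; unfold h; ring

theorem V_le_one (n : ℕ) : V n ≤ 1 := by
  unfold V U
  rw [← ENNReal.ofReal_one]
  apply ENNReal.ofReal_le_ofReal
  rw [div_le_one (pos1 zero_lt_one n)]
  have : (0 : ℝ) ≤ n := Nat.cast_nonneg n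
  linarith

theorem U_le {x : ℝ} (hx : x ≤ 1 / 2) (n : ℕ) : U x n ≤ 2 * V n := by
  have h1 := pos1 (show x < 1 by linarith) n
  have h2 := pos1 zero_lt_one n
  unfold V U
  rw [show (2 : ℝ≥0∞) = ENNReal.ofReal 2 by simp, ← ENNReal.ofReal_mul (by norm_num)]
  apply ENNReal.ofReal_le_ofReal
  have : (0 : ℝ) ≤ n := Nat.cast_nonneg n
  rw [mul_one_div, div_le_div_iff₀ h1 h2]
  linarith

theorem V_le_succ (n : ℕ) : V n ≤ 2 * V (n + 1) := by
  have h1 := pos1 zero_lt_one (n + 1)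
  have h2 := pos1 zero_lt_one n
  unfold V U
  rw [show (2 : ℝ≥0∞) = ENNReal.ofReal 2 by simp, ← ENNReal.ofReal_mul (by norm_num)]
  apply ENNReal.ofReal_le_ofReal
  have : (0 : ℝ) ≤ n := Nat.cast_nonneg n
  rw [mul_one_div, div_le_div_iff₀ h2 h1]
  push_cast
  linarith

theorem V_pow_le {a b : ℕ} (hab : a ≤ b) (n : ℕ) : V n ^ b ≤ V n ^ a :=
  pow_le_pow_right_of_le_one' (V_le_one n) hab

theorem sumV2 : ∑' n, V n ^ 2 ≠ ∞ := by
  have h := L_sum zero_lt_one 0 0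
  have h2 : ∑' n, V n ^ 2 ≤ 2 * ∑' p, V (0 + p) * V (0 + p + 0 + 1) := by
    rw [← ENNReal.tsum_mul_left]
    apply ENNReal.tsum_le_tsum
    intro n
    simp only [zero_add, add_zero]
    calc _ = V n * V n := by ring
      _ ≤ V n * (2 * V (n + 1)) := by gcongr; exact V_le_succ n
      _ = _ := by ring
  rw [h] at h2
  refine ne_top_of_le_ne_top ?_ h2
  have := U_ne_top 0 0
  simp only [zero_add, Finset.sum_range_one]
  finiteness

theorem sumV21 : ∑' n, V n ^ 2 * h 0 n ≠ ∞ := by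
  have := T_V zero_lt_one (h 0)
  simp_rw [T_h zero_lt_one] at this
  have e : ∑' n, V n ^ 2 * h 0 n = ∑' n, V n ^ 3 := by
    calc _ = ∑' k, U 0 k * V k * h 0 k := by congr 1; ext n; ring
      _ = _ := by rw [this]; congr 1; ext n; ring
  rw [e]
  exact ne_top_of_le_ne_top sumV2 (ENNReal.tsum_le_tsum (fun n => V_pow_le (by norm_num) n))

theorem UV_le {x : ℝ} (hx : x ≤ 1 / 2) (a b k : ℕ) (hk : k ≤ a + b) (n : ℕ) :
    U x n ^ a * V n ^ b ≤ 2 ^ a * V n ^ k := by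
  calc U x n ^ a * V n ^ b ≤ (2 * V n) ^ a * V n ^ b := by gcongr; exact U_le hx n
    _ = 2 ^ a * V n ^ (a + b) := by rw [mul_pow, pow_add]; ring
    _ ≤ _ := by gcongr 1; exact V_pow_le hk n

theorem dg_fin {x : ℝ} (hx : x ≤ 1 / 2) (a b : ℕ) (hk : 2 ≤ a + b) : dg x a b ≠ ∞ := by
  have : dg x a b ≤ 2 ^ a * ∑' n, V n ^ 2 := by
    rw [← ENNReal.tsum_mul_left]
    exact ENNReal.tsum_le_tsum (fun n => UV_le hx a b 2 hk n)
  refine ne_top_of_le_ne_top ?_ this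
  have := sumV2
  finiteness

theorem br_fin {x : ℝ} (hx : x ≤ 1 / 2) (a b c d : ℕ) (hk : 2 ≤ a + b) (hl : 1 ≤ c + d) :
    br x a b c d ≠ ∞ := by
  have : br x a b c d ≤ 2 ^ a * 2 ^ c * ∑' n, V n ^ 2 * h 0 n := by
    rw [← ENNReal.tsum_mul_left]
    apply ENNReal.tsum_le_tsum
    intro n
    unfold h
    rw [Finset.mul_sum, Finset.mul_sum]
    apply Finset.sum_le_sum
    intro m _
    calc _ ≤ (2 ^ a * V n ^ 2) * (2 ^ c * V m ^ 1) :=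
          mul_le_mul' (UV_le hx a b 2 hk n) (UV_le hx c d 1 hl m)
      _ = _ := by ring
  refine ne_top_of_le_ne_top ?_ this
  have := sumV21
  finiteness

theorem main_eq {x : ℝ} (h0 : 0 ≤ x) (hx : x ≤ 1 / 2) :
    W x + 2 * br x 0 3 1 0 + (3 * dg x 0 4 + br x 0 2 0 2 + 2 * br x 0 3 0 1) =
      2 * dg x 2 2 + 2 * dg x 1 3 + br x 2 0 0 2 := by
  have hx1 : x < 1 := by linarith
  have k1 := B2_eq h0 hx1
  have k2 := M_eq hx1
  have k3 := E_eq h0 hx1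
  have k4 := P1 h0 hx1
  have k5 := P2 hx1
  have k6 := br_up h0 hx1 0 1 0 2
  have k7 := dg_up h0 hx1 0 3
  have k8 := br_up h0 hx1 0 2 0 1
  have k9 := br_low h0 hx1 1 1 1 0
  have k10 := br_up h0 hx1 0 1 1 1
  have k11 := br_up h0 hx1 1 1 1 0
  have k12 := br_up h0 hx1 0 2 1 0
  have kW := W_eq hx1
  simp only [zero_add, Nat.reduceAdd, mul_add] at *
  have f1 := br_fin hx 2 0 0 2 (by norm_num) (by norm_num)
  have f2 := dg_fin hx 2 2 (by norm_num)
  have f3 := br_fin hx 0 2 1 1 (by norm_num) (by norm_num)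
  have f4 := br_fin hx 1 2 0 1 (by norm_num) (by norm_num)
  have f5 := br_fin hx 1 2 1 0 (by norm_num) (by norm_num)
  have f6 := br_fin hx 1 3 1 0 (by norm_num) (by norm_num)
  have f7 := dg_fin hx 1 3 (by norm_num)
  have f8 := br_fin hx 1 1 1 2 (by norm_num) (by norm_num)
  have f9 := br_fin hx 1 1 0 2 (by norm_num) (by norm_num)
  have f10 := br_fin hx 2 1 1 0 (by norm_num) (by norm_num)
  have f11 := br_fin hx 1 1 2 0 (by norm_num) (by norm_num)
  have f12 := br_fin hx 2 1 0 1 (by norm_num) (by norm_num)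
  have f13 := br_fin hx 0 2 0 2 (by norm_num) (by norm_num)
  have f14 := br_fin hx 1 2 0 2 (by norm_num) (by norm_num)
  have f15 := dg_fin hx 0 4 (by norm_num)
  have f16 := dg_fin hx 1 4 (by norm_num)
  have f17 := br_fin hx 0 3 0 1 (by norm_num) (by norm_num)
  have f18 := br_fin hx 1 3 0 1 (by norm_num) (by norm_num)
  have f19 := br_fin hx 1 1 1 1 (by norm_num) (by norm_num)
  have f20 := br_fin hx 1 1 2 1 (by norm_num) (by norm_num)
  have f21 := br_fin hx 1 2 1 1 (by norm_num) (by norm_num)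
  have f22 := br_fin hx 2 2 1 0 (by norm_num) (by norm_num)
  have f23 := br_fin hx 0 3 1 0 (by norm_num) (by norm_num)
  have hX : ENNReal.ofReal x ≠ ∞ := ENNReal.ofReal_ne_top
  have f24 : ENNReal.ofReal x * B2 x ≠ ∞ := by
    refine ne_top_of_le_ne_top ?_ (k1 ▸ le_self_add); finiteness
  have f25 : MM x ≠ ∞ := by
    refine ne_top_of_le_ne_top ?_ (k1 ▸ le_add_self); finiteness
  have f26 : EE x ≠ ∞ := by
    refine ne_top_of_le_ne_top f7 (k3 ▸ le_self_add)
  generalize ENNReal.ofReal x * B2 x = b2 at *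
  generalize W x = w at *
  generalize MM x = mm at *
  generalize EE x = e at *
  generalize ENNReal.ofReal x = X at *
  generalize br x 2 0 0 2 = y1 at *
  generalize dg x 2 2 = y2 at *
  generalize br x 0 2 1 1 = y3 at *
  generalize br x 1 2 0 1 = y4 at *
  generalize br x 1 2 1 0 = y5 at *
  generalize br x 1 3 1 0 = y6 at *
  generalize dg x 1 3 = y7 at *
  generalize br x 1 1 1 2 = y8 at *
  generalize br x 1 1 0 2 = y9 at *
  generalize br x 2 1 1 0 = y10 at *
  generalize br x 1 1 2 0 = y11 at *
  generalize br x 2 1 0 1 = y12 at *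
  generalize br x 0 2 0 2 = y13 at *
  generalize br x 1 2 0 2 = y14 at *
  generalize dg x 0 4 = y15 at *
  generalize dg x 1 4 = y16 at *
  generalize br x 0 3 0 1 = y17 at *
  generalize br x 1 3 0 1 = y18 at *
  generalize br x 1 1 1 1 = y19 at *
  generalize br x 1 1 2 1 = y20 at *
  generalize br x 1 2 1 1 = y21 at *
  generalize br x 2 2 1 0 = y22 at *
  generalize br x 0 3 1 0 = y23 at *
  subst kW
  lift X to NNReal using hX
  lift b2 to NNReal using f24
  lift mm to NNReal using f25
  lift e to NNReal using f26
  lift y1 to NNReal using f1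
  lift y2 to NNReal using f2
  lift y3 to NNReal using f3
  lift y4 to NNReal using f4
  lift y5 to NNReal using f5
  lift y6 to NNReal using f6
  lift y7 to NNReal using f7
  lift y8 to NNReal using f8
  lift y9 to NNReal using f9
  lift y10 to NNReal using f10
  lift y11 to NNReal using f11
  lift y12 to NNReal using f12
  lift y13 to NNReal using f13
  lift y14 to NNReal using f14
  lift y15 to NNReal using f15
  lift y16 to NNReal using f16
  lift y17 to NNReal using f17
  lift y18 to NNReal using f18
  lift y19 to NNReal using f19
  lift y20 to NNReal using f20
  lift y21 to NNReal using f21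
  lift y22 to NNReal using f22
  lift y23 to NNReal using f23
  norm_cast at *
  rw [← NNReal.coe_inj] at *
  push_cast at *
  linarith

theorem U_ser {x : ℝ} (h0 : 0 ≤ x) (hx : x < 1) (n : ℕ) :
    U x n = ∑' a, ENNReal.ofReal x ^ a * V n ^ (a + 1) := by
  have h1 := pos1 hx n
  have hn : (0 : ℝ) ≤ n := Nat.cast_nonneg n
  have h2 : (0 : ℝ) < (n : ℝ) + 1 := by positivity
  have hr0 : 0 ≤ x / ((n : ℝ) + 1) := by positivity
  have hr1 : x / ((n : ℝ) + 1) < 1 := by rw [div_lt_one h2]; linarith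
  have hg := (hasSum_geometric_of_lt_one hr0 hr1).mul_left (1 / ((n : ℝ) + 1))
  have e1 : 1 / ((n : ℝ) + 1) * (1 - x / ((n : ℝ) + 1))⁻¹ = 1 / ((n : ℝ) + 1 - x) := by
    have : (1 - x / ((n : ℝ) + 1)) = ((n : ℝ) + 1 - x) / ((n : ℝ) + 1) := by field_simp
    rw [this]
    field_simp
  rw [e1] at hg
  unfold U
  rw [← hg.tsum_eq, ENNReal.ofReal_tsum_of_nonneg (fun i => by positivity) hg.summable]
  congr 1
  ext a
  rw [← ENNReal.ofReal_pow h0, V, U, sub_zero, ← ENNReal.ofReal_pow (by positivity),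
    ← ENNReal.ofReal_mul (by positivity)]
  congr 1
  rw [div_pow, div_pow, one_pow, pow_succ]
  field_simp

theorem U2_ser {x : ℝ} (h0 : 0 ≤ x) (hx : x + x < 1) (n : ℕ) :
    U (x + x) n = ∑' a, 2 ^ a * (ENNReal.ofReal x ^ a * V n ^ (a + 1)) := by
  rw [U_ser (by linarith) hx]
  congr 1
  ext a
  rw [ENNReal.ofReal_add h0 h0, ← two_mul, mul_pow]
  ring

/-- coefficient `2^a - 1` -/
noncomputable def cA (a : ℕ) : ℝ≥0∞ := 2 ^ a - 1

theorem cA_add (a : ℕ) : (2 : ℝ≥0∞) ^ a = 1 + cA a := by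
  unfold cA
  rw [add_tsub_cancel_of_le (one_le_pow_of_one_le' (by norm_num) a)]

theorem UU_ser {x : ℝ} (h0 : 0 ≤ x) (hx : x + x < 1) (n : ℕ) :
    ENNReal.ofReal x * U (x + x) n * U x n =
      ∑' a, cA a * (ENNReal.ofReal x ^ a * V n ^ (a + 1)) := by
  have h1 := U_rel h0 hx n
  have h2 := U2_ser h0 hx n
  simp_rw [cA_add, add_mul, one_mul] at h2
  rw [ENNReal.tsum_add, ← U_ser h0 (by linarith), h1] at h2
  exact (ENNReal.add_right_inj (U_ne_top x n)).1 h2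

theorem Usq_ser {x : ℝ} (h0 : 0 ≤ x) (hx : x < 1) (n : ℕ) :
    U x n ^ 2 = ∑' N : ℕ, ENNReal.ofReal x ^ N * (((N : ℝ≥0∞) + 1) * V n ^ (N + 2)) := by
  have h1 : U x n ^ 2 = ∑' a, ∑' b, ENNReal.ofReal x ^ (a + b) * V n ^ (a + b + 2) := by
    rw [sq]
    nth_rewrite 2 [U_ser h0 hx]
    rw [U_ser h0 hx, ← ENNReal.tsum_mul_right]
    congr 1
    ext a
    rw [← ENNReal.tsum_mul_left]
    congr 1
    ext b
    ring
  rw [h1, cauchy (fun a b => ENNReal.ofReal x ^ (a + b) * V n ^ (a + b + 2))]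
  congr 1
  ext N
  have : ∀ a ∈ range (N + 1), ENNReal.ofReal x ^ (a + (N - a)) * V n ^ (a + (N - a) + 2) =
      ENNReal.ofReal x ^ N * V n ^ (N + 2) := by
    intro a ha
    have := Finset.mem_range.1 ha
    rw [show a + (N - a) = N by omega]
  rw [Finset.sum_congr rfl this, Finset.sum_const, Finset.card_range, nsmul_eq_mul]
  push_cast
  ring

noncomputable def Z1 (s : ℕ) : ℝ≥0∞ := ∑' n, V n ^ s

noncomputable def Z2 (s t : ℕ) : ℝ≥0∞ := ∑' n, ∑ m ∈ range n, V n ^ s * V m ^ t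

noncomputable def Z4 (s t v w : ℕ) : ℝ≥0∞ := S4 fun n p q r =>
  V (n + p + q + r + 3) ^ s * V (n + p + q + 2) ^ t * V (n + p + 1) ^ v * V n ^ w

theorem dg22 {x : ℝ} (h0 : 0 ≤ x) (hx : x < 1) :
    dg x 2 2 = ∑' N : ℕ, ENNReal.ofReal x ^ N * (((N : ℝ≥0∞) + 1) * Z1 (N + 4)) := by
  unfold dg Z1
  simp_rw [Usq_ser h0 hx, ← ENNReal.tsum_mul_right, ← ENNReal.tsum_mul_left]
  rw [ENNReal.tsum_comm]
  congr 1
  ext N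
  congr 1
  ext n
  ring

theorem dg13 {x : ℝ} (h0 : 0 ≤ x) (hx : x < 1) :
    dg x 1 3 = ∑' N : ℕ, ENNReal.ofReal x ^ N * Z1 (N + 4) := by
  unfold dg Z1
  simp_rw [pow_one, U_ser h0 hx, ← ENNReal.tsum_mul_right, ← ENNReal.tsum_mul_left]
  rw [ENNReal.tsum_comm]
  congr 1
  ext N
  congr 1
  ext n
  ring

theorem br2002 {x : ℝ} (h0 : 0 ≤ x) (hx : x < 1) :
    br x 2 0 0 2 = ∑' N : ℕ, ENNReal.ofReal x ^ N * (((N : ℝ≥0∞) + 1) * Z2 (N + 2) 2) := by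
  unfold br Z2
  simp_rw [← Finset.mul_sum, pow_zero, mul_one, one_mul, Usq_ser h0 hx, ← ENNReal.tsum_mul_right,
    ← ENNReal.tsum_mul_left]
  rw [ENNReal.tsum_comm]
  congr 1
  ext N
  congr 1
  ext n
  ring

theorem br0310 {x : ℝ} (h0 : 0 ≤ x) (hx : x < 1) :
    br x 0 3 1 0 = ∑' N : ℕ, ENNReal.ofReal x ^ N * Z2 3 (N + 1) := by
  have e : ∀ n, ∑ m ∈ range n, U x n ^ 0 * V n ^ 3 * (U x m ^ 1 * V m ^ 0) =
      ∑' N : ℕ, ENNReal.ofReal x ^ N * ∑ m ∈ range n, V n ^ 3 * V m ^ (N + 1) := by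
    intro n
    simp_rw [Finset.mul_sum]
    rw [Summable.tsum_finsetSum (fun _ _ => ENNReal.summable)]
    apply Finset.sum_congr rfl
    intro m _
    rw [pow_one, pow_zero, pow_zero, one_mul, mul_one, U_ser h0 hx, ← ENNReal.tsum_mul_left]
    congr 1
    ext N
    ring
  unfold br Z2
  simp_rw [e, ← ENNReal.tsum_mul_left]
  rw [ENNReal.tsum_comm]

theorem S4_tsum (f : ℕ → ℕ → ℕ → ℕ → ℕ → ℝ≥0∞) :
    S4 (fun n p q r => ∑' a, f a n p q r) = ∑' a, S4 (f a) := by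
  unfold S4
  symm
  rw [ENNReal.tsum_comm]
  congr 1; ext n
  rw [ENNReal.tsum_comm]
  congr 1; ext p
  rw [ENNReal.tsum_comm]
  congr 1; ext q
  rw [ENNReal.tsum_comm]

theorem S4_mul (c : ℝ≥0∞) (f : ℕ → ℕ → ℕ → ℕ → ℝ≥0∞) :
    S4 (fun n p q r => c * f n p q r) = c * S4 f := by
  unfold S4
  simp_rw [ENNReal.tsum_mul_left]

theorem prod4 (A B C D : ℕ → ℝ≥0∞) : (∑' a, A a) * (∑' b, B b) * (∑' c, C c) * (∑' d, D d) =
    ∑' a, ∑' b, ∑' c, ∑' d, A a * B b * C c * D d := by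
  simp only [ENNReal.tsum_mul_left, ENNReal.tsum_mul_right]

/-- coefficient of the left-hand side -/
noncomputable def al (N : ℕ) : ℝ≥0∞ :=
  ∑ a ∈ range (N + 1), ∑ b ∈ range (N - a + 1), ∑ c ∈ range (N - a - b + 1),
    cA a * (2 * 2 ^ b) * (2 * 2 ^ c + 1) * Z4 (a + 1) (b + 1) (c + 1) (N - a - b - c + 1)

theorem GA_ser0 {x : ℝ} (h0 : 0 ≤ x) (hx : x + x < 1) :
    GA x = ∑' a, ∑' b, ∑' c, ∑' d, ENNReal.ofReal x ^ (a + b + c + d) *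
      (cA a * (2 * 2 ^ b) * (2 * 2 ^ c + 1) * Z4 (a + 1) (b + 1) (c + 1) (d + 1)) := by
  have hx1 : x < 1 := by linarith
  have e2 : ∀ n, 2 * U (x + x) n =
      ∑' b, (2 * 2 ^ b) * (ENNReal.ofReal x ^ b * V n ^ (b + 1)) := by
    intro n
    rw [U2_ser h0 hx, ← ENNReal.tsum_mul_left]
    congr 1; ext b; ring
  have e3 : ∀ n, 2 * U (x + x) n + U x n =
      ∑' c, (2 * 2 ^ c + 1) * (ENNReal.ofReal x ^ c * V n ^ (c + 1)) := by
    intro n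
    rw [e2, U_ser h0 hx1, ← ENNReal.tsum_add]
    congr 1; ext b; ring
  unfold GA Z4
  simp_rw [e3, e2, UU_ser h0 hx, U_ser h0 hx1, ← S4_mul, ← S4_tsum]
  congr 1
  ext n p q r
  rw [prod4]
  congr 1; ext a
  congr 1; ext b
  congr 1; ext c
  congr 1; ext d
  ring

theorem GA_ser {x : ℝ} (h0 : 0 ≤ x) (hx : x + x < 1) :
    GA x = ∑' N : ℕ, ENNReal.ofReal x ^ N * al N := by
  rw [GA_ser0 h0 hx]
  set F : ℕ → ℕ → ℕ → ℕ → ℝ≥0∞ := fun a b c d => ENNReal.ofReal x ^ (a + b + c + d) *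
      (cA a * (2 * 2 ^ b) * (2 * 2 ^ c + 1) * Z4 (a + 1) (b + 1) (c + 1) (d + 1)) with hF
  change ∑' a, ∑' b, ∑' c, ∑' d, F a b c d = _
  have h1 : ∀ a b, ∑' c, ∑' d, F a b c d = ∑' m, ∑ c ∈ range (m + 1), F a b c (m - c) :=
    fun a b => cauchy (F a b)
  simp_rw [h1]
  have h2 : ∀ a, ∑' b, ∑' m, ∑ c ∈ range (m + 1), F a b c (m - c) =
      ∑' l, ∑ b ∈ range (l + 1), ∑ c ∈ range (l - b + 1), F a b c (l - b - c) :=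
    fun a => cauchy (fun b m => ∑ c ∈ range (m + 1), F a b c (m - c))
  simp_rw [h2]
  rw [cauchy (fun a l => ∑ b ∈ range (l + 1), ∑ c ∈ range (l - b + 1), F a b c (l - b - c))]
  congr 1
  ext N
  unfold al
  simp_rw [Finset.mul_sum]
  apply Finset.sum_congr rfl
  intro a ha
  apply Finset.sum_congr rfl
  intro b hb
  apply Finset.sum_congr rfl
  intro c hc
  rw [Finset.mem_range] at ha hb hc
  simp only [hF]
  rw [show a + b + c + (N - a - b - c) = N by omega]

theorem series_eq {x : ℝ} (h0 : 0 ≤ x) (hx : x ≤ 1 / 4) :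
    ∑' N : ℕ, ENNReal.ofReal x ^ N * (al N + 2 * Z2 3 (N + 1)) +
      (3 * Z1 4 + Z2 2 2 + 2 * Z2 3 1) =
    ∑' N : ℕ, ENNReal.ofReal x ^ N * (2 * ((N : ℝ≥0∞) + 2) * Z1 (N + 4) +
      ((N : ℝ≥0∞) + 1) * Z2 (N + 2) 2) := by
  have hx1 : x < 1 := by linarith
  have hm := main_eq h0 (show x ≤ 1 / 2 by linarith)
  rw [← GB_eq_W hx1, ← GA_eq_GB hx1, GA_ser h0 (by linarith), dg22 h0 hx1, dg13 h0 hx1,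
    br2002 h0 hx1, br0310 h0 hx1] at hm
  have e1 : dg x 0 4 = Z1 4 := by unfold dg Z1; simp
  have e2 : br x 0 2 0 2 = Z2 2 2 := by unfold br Z2; simp
  have e3 : br x 0 3 0 1 = Z2 3 1 := by unfold br Z2; simp
  rw [e1, e2, e3, ← ENNReal.tsum_mul_left, ← ENNReal.tsum_mul_left, ← ENNReal.tsum_mul_left,
    ← ENNReal.tsum_add, ← ENNReal.tsum_add, ← ENNReal.tsum_add] at hm
  calc _ = _ := by congr 2; ext N; ring
    _ = _ := hm
    _ = _ := by congr 1; ext N; ring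

theorem series_fin {x : ℝ} (h0 : 0 ≤ x) (hx : x ≤ 1 / 4) :
    ∑' N : ℕ, ENNReal.ofReal x ^ N * (2 * ((N : ℝ≥0∞) + 2) * Z1 (N + 4) +
      ((N : ℝ≥0∞) + 1) * Z2 (N + 2) 2) ≠ ∞ := by
  have hx1 : x < 1 := by linarith
  have hx2 : x ≤ 1 / 2 := by linarith
  have : 2 * dg x 2 2 + 2 * dg x 1 3 + br x 2 0 0 2 ≠ ∞ := by
    have := br_fin hx2 2 0 0 2 (by norm_num) (by norm_num)
    have := dg_fin hx2 2 2 (by norm_num)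
    have := dg_fin hx2 1 3 (by norm_num)
    finiteness
  rw [dg22 h0 hx1, dg13 h0 hx1, br2002 h0 hx1, ← ENNReal.tsum_mul_left, ← ENNReal.tsum_mul_left,
    ← ENNReal.tsum_add, ← ENNReal.tsum_add] at this
  convert this using 3
  ring

theorem le_of_small {a b C : ℝ≥0∞} (hC : C ≠ ∞)
    (hh : ∀ x : ℝ, 0 < x → x ≤ 1 / 4 → a ≤ b + ENNReal.ofReal x * C) : a ≤ b := by
  have ht : Filter.Tendsto (fun x : ℝ => b + ENNReal.ofReal x * C) (nhdsWithin 0 (Set.Ioi 0))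
      (nhds (b + 0 * C)) := by
    apply Filter.Tendsto.add tendsto_const_nhds
    apply ENNReal.Tendsto.mul_const _ (Or.inr hC)
    have : Filter.Tendsto (fun x : ℝ => ENNReal.ofReal x) (nhds 0) (nhds (ENNReal.ofReal 0)) :=
      (ENNReal.continuous_ofReal).tendsto 0
    rw [ENNReal.ofReal_zero] at this
    exact this.mono_left nhdsWithin_le_nhds
  rw [zero_mul, add_zero] at ht
  apply ge_of_tendsto ht
  have : Set.Ioc (0 : ℝ) (1 / 4) ∈ nhdsWithin (0 : ℝ) (Set.Ioi 0) :=
    Ioc_mem_nhdsGT (by norm_num)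
  filter_upwards [this] with x hx
  exact hh x hx.1 hx.2

theorem shift_fin {f : ℕ → ℝ≥0∞} (hf : ∑' N, ENNReal.ofReal (1 / 4) ^ N * f N ≠ ∞) (m : ℕ) :
    ∑' N, ENNReal.ofReal (1 / 4) ^ N * f (N + m) ≠ ∞ := by
  have h1 : ENNReal.ofReal (1 / 4) ^ m * ∑' N, ENNReal.ofReal (1 / 4) ^ N * f (N + m) ≤
      ∑' N, ENNReal.ofReal (1 / 4) ^ N * f N := by
    rw [← Summable.sum_add_tsum_nat_add' (k := m) (f := fun N => ENNReal.ofReal (1 / 4) ^ N * f N)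
      ENNReal.summable, ← ENNReal.tsum_mul_left]
    refine le_trans (le_of_eq ?_) le_add_self
    congr 1
    ext N
    rw [pow_add]; ring
  have h2 := ne_top_of_le_ne_top hf h1
  intro h3
  rw [h3, ENNReal.mul_top] at h2
  · exact h2 rfl
  · apply pow_ne_zero
    simp

theorem x_split (f : ℕ → ℝ≥0∞) (x : ℝ) (n : ℕ) :
    ∑' N, ENNReal.ofReal x ^ N * f N = ∑ i ∈ range n, ENNReal.ofReal x ^ i * f i +
      ENNReal.ofReal x ^ n * ∑' N, ENNReal.ofReal x ^ N * f (N + n) := by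
  rw [← Summable.sum_add_tsum_nat_add' (k := n) (f := fun N => ENNReal.ofReal x ^ N * f N)
      ENNReal.summable, ← ENNReal.tsum_mul_left]
  congr 2
  ext N
  rw [pow_add]; ring

theorem coef_le {f g : ℕ → ℝ≥0∞} (n : ℕ)
    (hg : ∑' N, ENNReal.ofReal (1 / 4) ^ N * g N ≠ ∞)
    (hh : ∀ x : ℝ, 0 < x → x ≤ 1 / 4 → ∑' N, ENNReal.ofReal x ^ N * f (N + n) =
      ∑' N, ENNReal.ofReal x ^ N * g (N + n)) : f n ≤ g n := by
  apply le_of_small (shift_fin hg (n + 1))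
  intro x hx0 hx1
  have h1 := hh x hx0 hx1
  rw [x_split _ x 1, x_split (fun N => g (N + n)) x 1] at h1
  simp only [Finset.sum_range_one, pow_zero, one_mul, zero_add, pow_one] at h1
  calc f n ≤ _ := le_self_add
    _ = _ := h1
    _ ≤ _ := by
      gcongr with N
      rw [show N + 1 + n = N + (n + 1) by ring]

theorem coef_eq {f g : ℕ → ℝ≥0∞}
    (hf : ∑' N, ENNReal.ofReal (1 / 4) ^ N * f N ≠ ∞)
    (hg : ∑' N, ENNReal.ofReal (1 / 4) ^ N * g N ≠ ∞)
    (hh : ∀ x : ℝ, 0 < x → x ≤ 1 / 4 → ∑' N, ENNReal.ofReal x ^ N * f N =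
      ∑' N, ENNReal.ofReal x ^ N * g N) (n : ℕ) : f n = g n := by
  induction n using Nat.strong_induction_on with
  | _ n ih =>
    have key : ∀ x : ℝ, 0 < x → x ≤ 1 / 4 → ∑' N, ENNReal.ofReal x ^ N * f (N + n) =
        ∑' N, ENNReal.ofReal x ^ N * g (N + n) := by
      intro x hx0 hx1
      have h1 := hh x hx0 hx1
      rw [x_split f x n, x_split g x n] at h1
      have e : ∑ i ∈ range n, ENNReal.ofReal x ^ i * f i =
          ∑ i ∈ range n, ENNReal.ofReal x ^ i * g i := by
        apply Finset.sum_congr rfl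
        intro i hi
        rw [ih i (Finset.mem_range.1 hi)]
      rw [e] at h1
      have hs : ∑ i ∈ range n, ENNReal.ofReal x ^ i * g i ≠ ∞ := by
        apply sum_ne_top'
        intro i
        have := shift_fin hg i
        have h2 : g i ≠ ∞ := by
          refine ne_top_of_le_ne_top this ?_
          have := ENNReal.le_tsum (f := fun N => ENNReal.ofReal (1 / 4) ^ N * g (N + i)) 0
          simpa using this
        finiteness
      have h3 := (ENNReal.add_right_inj hs).1 h1
      have hX0 : ENNReal.ofReal x ^ n ≠ 0 := pow_ne_zero _ (by simpa using hx0)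
      have hXt : ENNReal.ofReal x ^ n ≠ ∞ := by finiteness
      exact (ENNReal.mul_right_inj hX0 hXt).1 h3
    exact le_antisymm (coef_le n hg key) (coef_le n hf (fun x a b => (key x a b).symm))

theorem coef_main (N : ℕ) (hN : 1 ≤ N) : al N + 2 * Z2 3 (N + 1) ≠ ∞ ∧
    al N + 2 * Z2 3 (N + 1) = 2 * ((N : ℝ≥0∞) + 2) * Z1 (N + 4) +
      ((N : ℝ≥0∞) + 1) * Z2 (N + 2) 2 := by
  set g : ℕ → ℝ≥0∞ := fun N => 2 * ((N : ℝ≥0∞) + 2) * Z1 (N + 4) +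
      ((N : ℝ≥0∞) + 1) * Z2 (N + 2) 2 with hgdef
  set f : ℕ → ℝ≥0∞ := fun N => al N + 2 * Z2 3 (N + 1) +
    if N = 0 then (3 * Z1 4 + Z2 2 2 + 2 * Z2 3 1) else 0 with hfdef
  have hh : ∀ x : ℝ, 0 ≤ x → x ≤ 1 / 4 → ∑' N, ENNReal.ofReal x ^ N * f N =
      ∑' N, ENNReal.ofReal x ^ N * g N := by
    intro x hx0 hx1
    rw [← series_eq hx0 hx1, hfdef]
    simp_rw [mul_add (ENNReal.ofReal x ^ _) (_ + _) (ite _ _ _)]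
    rw [ENNReal.tsum_add]
    congr 1
    rw [tsum_eq_single 0]
    · simp
    · intro b hb
      rw [if_neg hb, mul_zero]
  have hg : ∑' N, ENNReal.ofReal (1 / 4) ^ N * g N ≠ ∞ := series_fin (by norm_num) le_rfl
  have hf : ∑' N, ENNReal.ofReal (1 / 4) ^ N * f N ≠ ∞ := by
    rw [hh _ (by norm_num) le_rfl]; exact hg
  have h1 := coef_eq hf hg (fun x a b => hh x a.le b) N
  have h2 : f N = al N + 2 * Z2 3 (N + 1) := by
    simp only [hfdef]
    rw [if_neg (by omega), add_zero]
  have h3 : g N ≠ ∞ := by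
    refine ne_top_of_le_ne_top (shift_fin hg N) ?_
    have := ENNReal.le_tsum (f := fun n => ENNReal.ofReal (1 / 4) ^ n * g (n + N)) 0
    simpa using this
  rw [h2] at h1
  exact ⟨h1 ▸ h3, h1⟩

theorem V_toReal (n : ℕ) : (V n).toReal = 1 / ((n : ℝ) + 1) := by
  unfold V U
  rw [sub_zero, ENNReal.toReal_ofReal (by positivity)]

theorem mzv_eq {d : ℕ} (s : Fin d → ℕ) {ι : Type} (e : ι → Fin d → ℕ)
    (hmem : ∀ i, StrictAnti (fun j => e i j + 1))
    (hinj : Function.Injective e)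
    (hsurj : ∀ k : Fin d → ℕ, StrictAnti k → (∀ i, 0 < k i) → ∃ i, (fun j => e i j + 1) = k) :
    mzv s = (∑' i, ∏ j, V (e i j) ^ s j).toReal := by
  have hb : Function.Bijective (fun i => (⟨fun j => e i j + 1, hmem i, fun j => Nat.succ_pos _⟩ :
      {k : Fin d → ℕ // StrictAnti k ∧ ∀ i, 0 < k i})) := by
    constructor
    · intro a b hab
      apply hinj
      have := congrArg Subtype.val hab
      funext j
      have := congrFun this j
      simpa using this
    · rintro ⟨k, hk1, hk2⟩
      obtain ⟨i, hi⟩ := hsurj k hk1 hk2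
      exact ⟨i, Subtype.ext hi⟩
  unfold mzv
  rw [ENNReal.tsum_toReal_eq, ← (Equiv.ofBijective _ hb).tsum_eq]
  · congr 1
    ext i
    rw [ENNReal.toReal_prod]
    apply Finset.prod_congr rfl
    intro j _
    rw [ENNReal.toReal_pow, V_toReal]
    simp
  · intro i
    apply ENNReal.prod_ne_top
    intro j _
    have := U_ne_top 0 (e i j)
    finiteness

theorem mzv1 (s : ℕ) : mzv ![s] = (Z1 s).toReal := by
  rw [mzv_eq ![s] (fun (n : ℕ) => ![n])]
  · unfold Z1; simp
  · intro i a b hab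
    exact absurd hab (by rw [Subsingleton.elim a b]; exact lt_irrefl _)
  · intro a b hab
    simpa using congrFun hab 0
  · intro k _ hk
    refine ⟨k 0 - 1, ?_⟩
    funext j
    have := hk 0
    fin_cases j
    simp
    omega

theorem mzv2 (s t : ℕ) : mzv ![s, t] = (Z2 s t).toReal := by
  rw [mzv_eq ![s, t] (fun (i : ℕ × ℕ) => ![i.1 + i.2 + 1, i.1])]
  · unfold Z2
    rw [tri_lt (fun n m => V n ^ s * V m ^ t), ENNReal.tsum_prod']
    simp [Fin.prod_univ_two]
  · intro i
    rw [Fin.strictAnti_iff_succ_lt]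
    intro j
    fin_cases j
    simp
  · rintro ⟨a, b⟩ ⟨a', b'⟩ hab
    have h0 := congrFun hab 0
    have h1 := congrFun hab 1
    simp at h0 h1
    ext <;> simp <;> omega
  · intro k hk hp
    refine ⟨(k 1 - 1, k 0 - k 1 - 1), ?_⟩
    have := hp 1
    have := hk (show (0 : Fin 2) < 1 by decide)
    funext j
    fin_cases j <;> simp <;> omega

theorem mzv4 (s t v w : ℕ) : mzv ![s, t, v, w] = (Z4 s t v w).toReal := by
  rw [mzv_eq ![s, t, v, w] (fun (i : ℕ × ℕ × ℕ × ℕ) =>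
    ![i.1 + i.2.1 + i.2.2.1 + i.2.2.2 + 3, i.1 + i.2.1 + i.2.2.1 + 2, i.1 + i.2.1 + 1, i.1])]
  · unfold Z4 S4
    rw [ENNReal.tsum_prod']
    simp_rw [ENNReal.tsum_prod']
    simp [Fin.prod_univ_four]
  · intro i
    rw [Fin.strictAnti_iff_succ_lt]
    intro j
    fin_cases j <;> simp <;> omega
  · rintro ⟨a, b, c, d⟩ ⟨a', b', c', d'⟩ hab
    have h0 := congrFun hab 0
    have h1 := congrFun hab 1
    have h2 := congrFun hab 2
    have h3 := congrFun hab 3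
    simp at h0 h1 h2 h3
    ext <;> simp <;> omega
  · intro k hk hp
    refine ⟨(k 3 - 1, k 2 - k 3 - 1, k 1 - k 2 - 1, k 0 - k 1 - 1), ?_⟩
    have := hp 3
    have := hk (show (0 : Fin 4) < 1 by decide)
    have := hk (show (1 : Fin 4) < 2 by decide)
    have := hk (show (2 : Fin 4) < 3 by decide)
    funext j
    fin_cases j <;> simp <;> omega

theorem cA_toReal (a : ℕ) : (cA a).toReal = 2 ^ a - 1 := by
  have := congrArg ENNReal.toReal (cA_add a)
  rw [ENNReal.toReal_add (by simp) (by unfold cA; finiteness)] at this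
  simp at this
  linarith

theorem al_toReal (N : ℕ) (hf : al N ≠ ∞) : (al N).toReal =
    ∑ a ∈ range (N + 1), ∑ b ∈ range (N - a + 1), ∑ c ∈ range (N - a - b + 1),
    ((2 : ℝ) ^ a - 1) * 2 ^ (b + 1) * (2 ^ (c + 1) + 1) *
      mzv ![a + 1, b + 1, c + 1, N - a - b - c + 1] := by
  unfold al at *
  rw [ne_eq, ENNReal.sum_eq_top] at hf
  push Not at hf
  rw [ENNReal.toReal_sum hf]
  apply Finset.sum_congr rfl
  intro a ha
  have hf := hf a ha
  rw [ne_eq, ENNReal.sum_eq_top] at hf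
  push Not at hf
  rw [ENNReal.toReal_sum hf]
  apply Finset.sum_congr rfl
  intro b hb
  have hf := hf b hb
  rw [ne_eq, ENNReal.sum_eq_top] at hf
  push Not at hf
  rw [ENNReal.toReal_sum hf]
  apply Finset.sum_congr rfl
  intro c hc
  rw [ENNReal.toReal_mul, ENNReal.toReal_mul, ENNReal.toReal_mul, cA_toReal, mzv4]
  rw [ENNReal.toReal_add (by finiteness) (by simp)]
  simp only [ENNReal.toReal_mul, ENNReal.toReal_pow, ENNReal.toReal_ofNat, ENNReal.toReal_one]
  ring

theorem real_main (N : ℕ) (hN : 1 ≤ N) :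
    ∑ a ∈ range (N + 1), ∑ b ∈ range (N - a + 1), ∑ c ∈ range (N - a - b + 1),
    ((2 : ℝ) ^ a - 1) * 2 ^ (b + 1) * (2 ^ (c + 1) + 1) *
      mzv ![a + 1, b + 1, c + 1, N - a - b - c + 1] =
    2 * ((N : ℝ) + 2) * mzv ![N + 4] + ((N : ℝ) + 1) * mzv ![N + 2, 2] - 2 * mzv ![3, N + 1] := by
  obtain ⟨h1, h2⟩ := coef_main N hN
  have h3 : al N ≠ ∞ := (ENNReal.add_ne_top.1 h1).1
  have h4 : 2 * Z2 3 (N + 1) ≠ ∞ := (ENNReal.add_ne_top.1 h1).2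
  rw [← al_toReal N h3, mzv1, mzv2, mzv2]
  have h5 := h2 ▸ h1
  have h6 := congrArg ENNReal.toReal h2
  rw [ENNReal.toReal_add h3 h4, ENNReal.toReal_add (ENNReal.add_ne_top.1 h5).1
    (ENNReal.add_ne_top.1 h5).2] at h6
  simp only [ENNReal.toReal_mul] at h6
  rw [ENNReal.toReal_add (by simp) (by simp), ENNReal.toReal_add (by simp) (by simp)] at h6
  simp only [ENNReal.toReal_ofNat, ENNReal.toReal_one, ENNReal.toReal_natCast] at h6
  linarith

theorem sum_Icc_one (f : ℕ → ℝ) (n : ℕ) : ∑ a ∈ Finset.Icc 1 n, f a = ∑ a ∈ range n, f (a + 1) := by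
  rw [← Finset.sum_image (s := range n) (g := fun a => a + 1) (f := f) (by intro a _ b _ hab; simpa using hab)]
  congr 1
  ext a
  simp only [Finset.mem_Icc, Finset.mem_image, Finset.mem_range]
  constructor
  · intro h; exact ⟨a - 1, by omega, by omega⟩
  · rintro ⟨b, hb, rfl⟩; omega

theorem final (N : ℕ) (f : ℕ → ℕ → ℕ → ℝ) (hf : ∀ b c, f 1 b c = 0) :
    (∑ a ∈ Finset.Icc 2 (N + 1), ∑ b ∈ Finset.Icc 1 (N + 4 - a - 2),
      ∑ c ∈ Finset.Icc 1 (N + 4 - a - b - 1), f a b c) =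
    ∑ a ∈ range (N + 1), ∑ b ∈ range (N - a + 1), ∑ c ∈ range (N - a - b + 1),
      f (a + 1) (b + 1) (c + 1) := by
  have h1 : (∑ a ∈ Finset.Icc 2 (N + 1), ∑ b ∈ Finset.Icc 1 (N + 4 - a - 2),
      ∑ c ∈ Finset.Icc 1 (N + 4 - a - b - 1), f a b c) =
      ∑ a ∈ Finset.Icc 1 (N + 1), ∑ b ∈ Finset.Icc 1 (N + 4 - a - 2),
      ∑ c ∈ Finset.Icc 1 (N + 4 - a - b - 1), f a b c := by
    apply Finset.sum_subset
    · apply Finset.Icc_subset_Icc <;> omega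
    · intro a ha ha'
      simp only [Finset.mem_Icc] at ha ha'
      have : a = 1 := by omega
      subst this
      simp [hf]
  rw [h1, sum_Icc_one]
  apply Finset.sum_congr rfl
  intro a ha
  rw [Finset.mem_range] at ha
  rw [sum_Icc_one, show N + 4 - (a + 1) - 2 = N - a + 1 by omega]
  apply Finset.sum_congr rfl
  intro b hb
  rw [Finset.mem_range] at hb
  rw [sum_Icc_one, show N + 4 - (a + 1) - (b + 1) - 1 = N - a - b + 1 by omega]

end WSum

theorem weighted_sum_depth4_2221 (w : ℕ) (hw : 5 ≤ w)
    (q u : ℕ) (hq : q = w - 3) (hu : u = w - 2) :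
    (∑ a ∈ Finset.Icc 2 (w - 3), ∑ b ∈ Finset.Icc 1 (w - a - 2),
      ∑ c ∈ Finset.Icc 1 (w - a - b - 1),
        ((2 : ℝ) ^ (a - 1) - 1) * (2 : ℝ) ^ b * ((2 : ℝ) ^ c + 1) *
          mzv ![a, b, c, w - a - b - c])
    = 2 * (u : ℝ) * mzv ![w] + (q : ℝ) * mzv ![u, 2] - 2 * mzv ![3, q] := by
  obtain ⟨N, rfl⟩ : ∃ N, w = N + 4 := ⟨w - 4, by omega⟩
  have hN : 1 ≤ N := by omega
  obtain rfl : q = N + 1 := by omega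
  obtain rfl : u = N + 2 := by omega
  have h := WSum.real_main N hN
  have h2 := WSum.final N (fun a b c => ((2 : ℝ) ^ (a - 1) - 1) * (2 : ℝ) ^ b * ((2 : ℝ) ^ c + 1) *
          mzv ![a, b, c, N + 4 - a - b - c]) (by intro b c; simp)
  rw [show N + 4 - 3 = N + 1 by omega, h2]
  push_cast
  rw [← h]
  apply Finset.sum_congr rfl
  intro a ha
  apply Finset.sum_congr rfl
  intro b hb
  apply Finset.sum_congr rfl
  intro c hc
  rw [Finset.mem_range] at ha hb hc
  rw [show N + 3 - a - (b + 1) - (c + 1) = N - a - b - c + 1 by omega]
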